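/- arXiv:1410.5039 — 3 statements merged into one kernel-verified Lean document; each statement's English description precedes it below -/
import Mathlib

section
/- Let α be a cylindric partition and t a nonnegative integer. Then the number of marble games of length t whose initial arrangement is Arr(α) equals the number of marble games of length t whose final arrangement is Arr(α) (both collections are finite). Moreover, the same equality holds when both collections are restricted to games in which exactly one marble changes hands on every turn (i.e. every turn (t₀, …, t_{k−1}) satisfies Σ_i t_i = 1). -/
namespace CylCount

/-- A cylindric partition on the cylinder `C_{k,n}`: a weakly decreasing
function `ℤ → ℤ` with `f m = f (m + k) + (n - k)`. -/
structure CylPar (k n : ℕ) where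
  f : ℤ → ℤ
  antitone' : ∀ ⦃i j : ℤ⦄, i ≤ j → f j ≤ f i
  periodic' : ∀ m : ℤ, f m = f (m + k) + ((n : ℤ) - k)

/-- A turn from the arrangement `a`: a (k-periodic) assignment of numbers of
marbles passed, each person passing at most as many marbles as they have. -/
def TurnValid (k : ℕ) (a t : ℤ → ℕ) : Prop :=
  (∀ i : ℤ, t (i + k) = t i) ∧ ∀ i : ℤ, t i ≤ a i

/-- The arrangement produced by performing the turn `t` from arrangement `a`:
person `i` passes `t i` marbles to person `i+1`. -/
def nextArr (a t : ℤ → ℕ) : ℤ → ℕ := fun i => a i - t i + t (i - 1)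

/-- The arrangement after the first `j` turns of the sequence `T`, starting
from `a₀`. -/
def arrAfter (a₀ : ℤ → ℕ) (T : ℕ → ℤ → ℕ) : ℕ → (ℤ → ℕ)
  | 0 => a₀
  | j + 1 => nextArr (arrAfter a₀ T j) (T j)

/-- `a` is an arrangement of the `n - k` marbles among the `k` people. -/
def IsArrangement (k n : ℕ) (a : ℤ → ℕ) : Prop :=
  (∀ i : ℤ, a (i + k) = a i) ∧ ∑ i ∈ Finset.range k, a (i : ℤ) = n - k

/-- The marble arrangement of a cylindric partition `α`:
person `i` has `α(i-1) - α(i)` marbles. -/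
def Arr {k n : ℕ} (α : CylPar k n) : ℤ → ℕ := fun i => (α.f (i - 1) - α.f i).toNat

/-- Marble games of length `t` with initial arrangement `Arr(α)` (turns padded
by zero beyond `t` for canonicity). -/
def StartGames (k n : ℕ) (α : CylPar k n) (t : ℕ) : Type :=
  {T : ℕ → ℤ → ℕ //
    (∀ j < t, TurnValid k (arrAfter (Arr α) T j) (T j)) ∧ ∀ j ≥ t, T j = fun _ => 0}

/-- Marble games of length `t` (an initial arrangement together with `t`
successive valid turns) whose final arrangement is `Arr(α)`. -/
def EndGames (k n : ℕ) (α : CylPar k n) (t : ℕ) : Type :=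
  {p : (ℤ → ℕ) × (ℕ → ℤ → ℕ) //
    IsArrangement k n p.1 ∧
    (∀ j < t, TurnValid k (arrAfter p.1 p.2 j) (p.2 j)) ∧
    (∀ j ≥ t, p.2 j = fun _ => 0) ∧
    arrAfter p.1 p.2 t = Arr α}

/-- As `StartGames`, restricted to games in which exactly one marble changes
hands on every turn. -/
def StartGames1 (k n : ℕ) (α : CylPar k n) (t : ℕ) : Type :=
  {T : ℕ → ℤ → ℕ //
    (∀ j < t, TurnValid k (arrAfter (Arr α) T j) (T j)) ∧
    (∀ j ≥ t, T j = fun _ => 0) ∧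
    ∀ j < t, ∑ i ∈ Finset.range k, T j (i : ℤ) = 1}

/-- As `EndGames`, restricted to games in which exactly one marble changes
hands on every turn. -/
def EndGames1 (k n : ℕ) (α : CylPar k n) (t : ℕ) : Type :=
  {p : (ℤ → ℕ) × (ℕ → ℤ → ℕ) //
    IsArrangement k n p.1 ∧
    (∀ j < t, TurnValid k (arrAfter p.1 p.2 j) (p.2 j)) ∧
    (∀ j ≥ t, p.2 j = fun _ => 0) ∧
    arrAfter p.1 p.2 t = Arr α ∧
    ∀ j < t, ∑ i ∈ Finset.range k, p.2 j (i : ℤ) = 1}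

end CylCount

open CylCount

/-!
Let `M` be the transition matrix on arrangements, so that `M ^ t` counts marble games of length `t`.
The theorem says that `M ^ t` has the same row and column sums, and it follows from two facts:
`M` and `Mᵀ` have the same row sums, and `M` commutes with `Mᵀ`. Reversing a turn gives a turn in
which marbles travel the other way round the circle, so `Mᵀ` is the transition matrix of the game
with the opposite direction of passing. The legal turns from `a` do not depend on the direction,
which gives the first fact. The second is a bijection between the pairs of turns that bring `a` and
`b` to a common arrangement when passing one way and those that do so when passing the other way.
-/

namespace CylCount

open Matrix

section Counting

theorem pow_mulVec_eq_of_commute {ι R : Type*} [Fintype ι] [DecidableEq ι] [Semiring R]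
    {A B : Matrix ι ι R} {v : ι → R} (hAB : Commute A B) (hv : A *ᵥ v = B *ᵥ v) (t : ℕ) :
    A ^ t *ᵥ v = B ^ t *ᵥ v := by
  induction t with
  | zero => simp only [pow_zero]
  | succ t ih =>
    calc A ^ (t + 1) *ᵥ v = A *ᵥ B ^ t *ᵥ v := by rw [pow_succ', ← mulVec_mulVec, ih]
      _ = B ^ t *ᵥ A *ᵥ v := by rw [mulVec_mulVec, (hAB.pow_right t).eq, ← mulVec_mulVec]
      _ = B ^ (t + 1) *ᵥ v := by rw [hv, mulVec_mulVec, ← pow_succ]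

variable {X Y Z : Type*} [Fintype Z]

theorem sum_card_fiber_smul [Fintype X] {M : Type*} [AddCommMonoid M] (f : X → Z) (g : Z → M) :
    ∑ z, Nat.card {x // f x = z} • g z = ∑ x, g (f x) := by
  classical
  simp only [← Fintype.sum_fiberwise' f g, Finset.sum_const, Finset.card_univ,
    Nat.card_eq_fintype_card]

theorem sum_card_fiber_mul_card_fiber [Finite X] [Finite Y] (f : X → Z) (g : Y → Z) :
    ∑ z, Nat.card {x // f x = z} * Nat.card {y // g y = z} = Nat.card (f.Pullback g) := by
  have := Fintype.ofFinite X
  simp only [← smul_eq_mul, sum_card_fiber_smul, ← Nat.card_sigma]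
  refine Nat.card_congr (Equiv.trans ?_
    (Equiv.subtypeProdEquivSigmaSubtype fun x y => f x = g y).symm)
  exact Equiv.sigmaCongrRight fun x => Equiv.subtypeEquivRight fun y => eq_comm

end Counting

section Periodic

variable {k : ℕ} {u : ℤ → ℕ}

/-- The number of marbles in one period of `u`. -/
def total (k : ℕ) (u : ℤ → ℕ) : ℕ := ∑ i ∈ Finset.range k, u i

theorem total_add (u v : ℤ → ℕ) : total k (u + v) = total k u + total k v :=
  Finset.sum_add_distrib

theorem total_comp_add_one (hu : Function.Periodic u k) :
    total k (fun i => u (i + 1)) = total k u := by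
  have hlast := Finset.sum_range_succ (fun i : ℕ => u i) k
  have hfirst := Finset.sum_range_succ' (fun i : ℕ => u i) k
  have hends := hu.eq
  push_cast at hfirst
  simp only [total]
  omega

theorem total_comp_sub (hu : Function.Periodic u k) (d : ℤ) :
    total k (fun i => u (i - d)) = total k u := by
  induction d with
  | zero => simp only [sub_zero]
  | succ d ih =>
    rw [← ih, ← total_comp_add_one (hu.sub_const _)]
    simp only [add_sub_add_right_eq_sub]
  | pred d ih =>
    rw [← ih, ← total_comp_add_one (hu.sub_const (-(d : ℤ)))]
    congr! 3
    ring

theorem injOn_periodic_restrict [NeZero k] {β : Type*} :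
    Set.InjOn (fun (u : ℤ → β) (i : Fin k) => u (i : ℕ)) {u | Function.Periodic u k} := by
  intro u hu v hv huv
  funext i
  have hk : (0 : ℤ) < k := by exact_mod_cast NeZero.pos k
  have hmod : ∀ {w : ℤ → β}, Function.Periodic w k → w i = w (i % k).toNat := fun hw => by
    rw [Int.toNat_of_nonneg (Int.emod_nonneg i hk.ne'), Int.emod_def, mul_comm]
    exact (hw.sub_int_mul_eq (i / k)).symm
  rw [hmod hu, hmod hv]
  exact congrFun huv ⟨(i % k).toNat, by have := Int.emod_lt_of_pos i hk; omega⟩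

theorem finite_setOf_periodic_le [NeZero k] (b : Fin k → ℕ) :
    {u : ℤ → ℕ | Function.Periodic u k ∧ ∀ i : Fin k, u (i : ℕ) ≤ b i}.Finite :=
  .of_injOn (t := Set.Icc 0 b) (fun _ hu => ⟨fun _ => Nat.zero_le _, hu.2⟩)
    (injOn_periodic_restrict.mono fun _ hu => hu.1) (Set.finite_Icc _ _)

end Periodic

section Pass

variable {k n : ℕ} {d : ℤ} {a b u s t : ℤ → ℕ}

/-- The arrangement produced from `a` when every person `i` passes `u i` marbles to person `i + d`.
The game itself is the case `d = 1`, in which `pass` unfolds to `nextArr`; reversed turns are the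
case `d = -1`. -/
def pass (d : ℤ) (a u : ℤ → ℕ) : ℤ → ℕ := fun i => a i - u i + u (i - d)

theorem total_pass (hu : TurnValid k a u) : total k (pass d a u) = total k a := by
  have hbalance : pass d a u + u = a + fun i => u (i - d) := by
    ext i
    have := hu.2 i
    simp only [pass, Pi.add_apply]
    omega
  have := congrArg (total k) hbalance
  rw [total_add, total_add, total_comp_sub hu.1] at this
  omega

theorem isArrangement_pass (ha : IsArrangement k n a) (hu : TurnValid k a u) :
    IsArrangement k n (pass d a u) := by
  refine ⟨fun i => ?_, (total_pass hu).trans ha.2⟩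
  have hshift : u (i + k - d) = u (i - d) := Function.Periodic.sub_const hu.1 d i
  rw [pass, pass, ha.1, hu.1, hshift]

theorem turnValid_reverse (hu : TurnValid k a u) :
    TurnValid k (pass d a u) (fun i => u (i - d)) :=
  ⟨Function.Periodic.sub_const hu.1 d, fun _ => Nat.le_add_left _ _⟩

theorem pass_reverse (hu : ∀ i, u i ≤ a i) :
    pass (-d) (pass d a u) (fun i => u (i - d)) = a := by
  ext i
  have := hu i
  simp only [pass, sub_neg_eq_add, add_sub_cancel_right]
  omega

/-- The turn from `a` that replaces `t` when turns `t` from `a` and `s` from `b`, both passing by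
`d`, lead to a common arrangement. Together with the turn `exchange d s t` from `b` it leads to a
common arrangement when passing by `-d`. The subtraction is truncated. -/
def exchange (d : ℤ) (t s : ℤ → ℕ) : ℤ → ℕ :=
  fun i => min (t i) (s i) + (s (i - d) - t (i - d))

theorem exchange_neg_exchange (d : ℤ) (t s : ℤ → ℕ) :
    exchange (-d) (exchange d t s) (exchange d s t) = t := by
  ext i
  simp only [exchange, sub_neg_eq_add, add_sub_cancel_right]
  omega

theorem periodic_exchange (ht : Function.Periodic t k) (hs : Function.Periodic s k) :
    Function.Periodic (exchange d t s) k := fun i => by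
  simp only [exchange, ht i, hs i, ht.sub_const d i, hs.sub_const d i]

theorem total_exchange (ht : Function.Periodic t k) (hs : Function.Periodic s k) :
    total k (exchange d t s) = total k s := by
  have hexcess : Function.Periodic (s - t) k := fun i => by
    simp only [Pi.sub_apply, ht i, hs i]
  calc total k (exchange d t s) = total k (t ⊓ s) + total k (fun i => (s - t) (i - d)) :=
        total_add (t ⊓ s) (fun i => (s - t) (i - d))
    _ = total k (t ⊓ s + (s - t)) := by rw [total_comp_sub hexcess, total_add]
    _ = total k s := by
        congr 1
        ext i
        simp only [Pi.add_apply, Pi.inf_apply, Pi.sub_apply]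
        omega

theorem turnValid_exchange (ht : TurnValid k a t) (hs : TurnValid k b s)
    (h : pass d a t = pass d b s) : TurnValid k a (exchange d t s) := by
  refine ⟨periodic_exchange ht.1 hs.1, fun i => ?_⟩
  have hta := ht.2 i
  have hsb := hs.2 i
  have hi := congrFun h i
  simp only [pass] at hi
  simp only [exchange]
  omega

theorem pass_neg_exchange (ht : ∀ i, t i ≤ a i) (hs : ∀ i, s i ≤ b i)
    (h : pass d a t = pass d b s) :
    pass (-d) a (exchange d t s) = pass (-d) b (exchange d s t) := by
  ext i
  have hta := ht i
  have hsb := hs i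
  have hi := congrFun h i
  simp only [pass] at hi
  simp only [pass, exchange, sub_neg_eq_add, add_sub_cancel_right]
  omega

end Pass

section Transition

variable {k n : ℕ}

/-- The arrangements of `n - k` marbles among `k` people; these are the vertices of the graph on
which marble games are walks. -/
abbrev Arrangement (k n : ℕ) : Type := {a : ℤ → ℕ // IsArrangement k n a}

/-- The turns from `a` in which the number of marbles changing hands lies in `S`. Taking
`S = Set.univ` allows all turns, and `S = {1}` those passing exactly one marble. -/
abbrev Turn (k : ℕ) (S : Set ℕ) (a : ℤ → ℕ) : Type :=
  {u : ℤ → ℕ // TurnValid k a u ∧ total k u ∈ S}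

instance [NeZero k] : Finite (Arrangement k n) := by
  have hbound := finite_setOf_periodic_le fun _ : Fin k => n - k
  refine (hbound.subset fun a ha => ⟨ha.1, fun i => ?_⟩).to_subtype
  rw [← ha.2]
  exact Finset.single_le_sum_of_canonicallyOrdered (f := fun i : ℕ => a i)
    (Finset.mem_range.2 i.isLt)

instance [NeZero k] (S : Set ℕ) (a : ℤ → ℕ) : Finite (Turn k S a) :=
  ((finite_setOf_periodic_le fun i : Fin k => a (i : ℕ)).subset
    fun _ hu => ⟨hu.1.1, fun i => hu.1.2 i⟩).to_subtype

noncomputable instance [NeZero k] : Fintype (Arrangement k n) := .ofFinite _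

noncomputable instance [NeZero k] (S : Set ℕ) (a : ℤ → ℕ) : Fintype (Turn k S a) := .ofFinite _

noncomputable instance : DecidableEq (Arrangement k n) := Classical.decEq _

/-- The arrangement reached from `a` by the turn `u` when marbles are passed by `d`. -/
def move {S : Set ℕ} (d : ℤ) (a : Arrangement k n) (u : Turn k S a) : Arrangement k n :=
  ⟨pass d a u, isArrangement_pass a.2 u.2.1⟩

/-- The transition matrix of the marble game in which marbles are passed by `d`: its `(a, b)` entry
is the number of turns leading from `a` to `b`. -/
noncomputable def turnMatrix (k n : ℕ) (S : Set ℕ) (d : ℤ) :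
    Matrix (Arrangement k n) (Arrangement k n) ℕ :=
  fun a b => Nat.card {u : Turn k S a // move d a u = b}

variable [NeZero k] (S : Set ℕ) (d : ℤ)

theorem turnMatrix_mulVec (f : Arrangement k n → ℕ) (a : Arrangement k n) :
    (turnMatrix k n S d *ᵥ f) a = ∑ u : Turn k S a, f (move d a u) :=
  sum_card_fiber_smul (move d a) f

theorem turnMatrix_mulVec_one (a : Arrangement k n) :
    (turnMatrix k n S d *ᵥ 1) a = Fintype.card (Turn k S a) := by
  simp only [turnMatrix_mulVec, Pi.one_apply, Finset.sum_const, Finset.card_univ, smul_eq_mul,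
    mul_one]

theorem turnMatrix_le_neg_swap (a b : Arrangement k n) :
    turnMatrix k n S d a b ≤ turnMatrix k n S (-d) b a := by
  let reverse (u : {u : Turn k S a // move d a u = b}) : {v : Turn k S b // move (-d) b v = a} :=
    have hb : pass d a u.1 = b := congrArg Subtype.val u.2
    ⟨⟨fun i => u.1.1 (i - d), hb ▸ turnValid_reverse u.1.2.1,
      (total_comp_sub u.1.2.1.1 d).symm ▸ u.1.2.2⟩,
      Subtype.ext ((congrArg (pass (-d) · _) hb.symm).trans (pass_reverse u.1.2.1.2))⟩
  refine Nat.card_le_card_of_injective reverse fun u v huv => ?_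
  ext i
  simpa only [reverse, add_sub_cancel_right] using congrFun (congrArg (·.1.1) huv) (i + d)

theorem turnMatrix_neg : turnMatrix k n S (-d) = (turnMatrix k n S d)ᵀ := by
  ext a b
  refine le_antisymm ?_ (turnMatrix_le_neg_swap S d b a)
  simpa only [neg_neg, transpose_apply] using turnMatrix_le_neg_swap S (-d) a b

theorem turnMatrix_mul_transpose_apply (a b : Arrangement k n) :
    (turnMatrix k n S d * (turnMatrix k n S d)ᵀ) a b =
      Nat.card ((move (S := S) d a).Pullback (move (S := S) d b)) :=
  sum_card_fiber_mul_card_fiber (move d a) (move d b)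

theorem card_pullback_move_le_neg (a b : Arrangement k n) :
    Nat.card ((move (S := S) d a).Pullback (move (S := S) d b)) ≤
      Nat.card ((move (S := S) (-d) a).Pullback (move (S := S) (-d) b)) := by
  let swap (p : (move (S := S) d a).Pullback (move (S := S) d b)) :
      (move (S := S) (-d) a).Pullback (move (S := S) (-d) b) :=
    have h := congrArg Subtype.val p.2
    have ht := p.1.1.2
    have hs := p.1.2.2
    ⟨(⟨exchange d p.1.1 p.1.2, turnValid_exchange ht.1 hs.1 h,
        (total_exchange ht.1.1 hs.1.1).symm ▸ hs.2⟩,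
      ⟨exchange d p.1.2 p.1.1, turnValid_exchange hs.1 ht.1 h.symm,
        (total_exchange hs.1.1 ht.1.1).symm ▸ ht.2⟩),
      Subtype.ext (pass_neg_exchange ht.1.2 hs.1.2 h)⟩
  refine Nat.card_le_card_of_injective swap fun p q hpq => ?_
  have hfst : exchange d p.1.1 p.1.2 = exchange d q.1.1 q.1.2 := congrArg (·.1.1.1) hpq
  have hsnd : exchange d p.1.2 p.1.1 = exchange d q.1.2 q.1.1 := congrArg (·.1.2.1) hpq
  refine Subtype.ext (Prod.ext (Subtype.ext ?_) (Subtype.ext ?_))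
  · rw [← exchange_neg_exchange d p.1.1 p.1.2, hfst, hsnd, exchange_neg_exchange]
  · rw [← exchange_neg_exchange d p.1.2 p.1.1, hfst, hsnd, exchange_neg_exchange]

theorem commute_turnMatrix_transpose :
    Commute (turnMatrix k n S d) (turnMatrix k n S d)ᵀ := by
  ext a b
  calc (turnMatrix k n S d * (turnMatrix k n S d)ᵀ) a b
      = (turnMatrix k n S (-d) * (turnMatrix k n S (-d))ᵀ) a b := by
        simp only [turnMatrix_mul_transpose_apply]
        refine le_antisymm (card_pullback_move_le_neg S d a b) ?_
        simpa only [neg_neg] using card_pullback_move_le_neg S (-d) a b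
    _ = ((turnMatrix k n S d)ᵀ * turnMatrix k n S d) a b := by
        rw [turnMatrix_neg, transpose_transpose]

theorem turnMatrix_pow_mulVec_one (t : ℕ) :
    turnMatrix k n S d ^ t *ᵥ 1 = 1 ᵥ* turnMatrix k n S d ^ t := by
  rw [← mulVec_transpose, transpose_pow]
  refine pow_mulVec_eq_of_commute (commute_turnMatrix_transpose S d) ?_ t
  ext a
  rw [← turnMatrix_neg, turnMatrix_mulVec_one, turnMatrix_mulVec_one]

end Transition

section Game

variable {k n : ℕ} {S : Set ℕ} {t : ℕ} {a : ℤ → ℕ} {T : ℕ → ℤ → ℕ}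

/-- `T` is the sequence of turns of a marble game of length `t` from `a` in which the number of
marbles changing hands on each turn lies in `S`; the sequence is zero from time `t` on. -/
def IsGame (k : ℕ) (S : Set ℕ) (t : ℕ) (a : ℤ → ℕ) (T : ℕ → ℤ → ℕ) : Prop :=
  (∀ j < t, TurnValid k (arrAfter a T j) (T j) ∧ total k (T j) ∈ S) ∧ ∀ j ≥ t, T j = fun _ => 0

theorem arrAfter_succ' (a : ℤ → ℕ) (T : ℕ → ℤ → ℕ) (j : ℕ) :
    arrAfter a T (j + 1) = arrAfter (nextArr a (T 0)) (fun i => T (i + 1)) j := by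
  induction j with
  | zero => rfl
  | succ j ih => rw [arrAfter, ih, arrAfter]

theorem isGame_succ_iff :
    IsGame k S (t + 1) a T ↔ (TurnValid k a (T 0) ∧ total k (T 0) ∈ S) ∧
      IsGame k S t (nextArr a (T 0)) (fun i => T (i + 1)) := by
  simp only [IsGame, Nat.forall_lt_succ_left, ← arrAfter_succ', arrAfter, and_assoc]
  refine and_congr_right' (and_congr_right' (and_congr_right' ⟨fun h j hj => h _ (by omega), ?_⟩))
  rintro h (_ | j) hj
  · omega
  · exact h j (by omega)

theorem isArrangement_arrAfter (ha : IsArrangement k n a) (hT : IsGame k S t a T) :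
    ∀ j ≤ t, IsArrangement k n (arrAfter a T j)
  | 0, _ => ha
  | j + 1, hj => isArrangement_pass (isArrangement_arrAfter ha hT j (by omega)) (hT.1 j hj).1

/-- The marble games of length `t` with initial arrangement `a` in which the number of marbles
changing hands on each turn lies in `S`. -/
abbrev Game (S : Set ℕ) (t : ℕ) (a : Arrangement k n) : Type :=
  {T : ℕ → ℤ → ℕ // IsGame k S t a T}

namespace Game

/-- The final arrangement of a game. -/
def final {a : Arrangement k n} (T : Game S t a) : Arrangement k n :=
  ⟨arrAfter a T t, isArrangement_arrAfter a.2 T.2 t le_rfl⟩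

/-- A game of length `t + 1` is its first turn followed by a game of length `t`. -/
def succEquiv (S : Set ℕ) (t : ℕ) (a : Arrangement k n) :
    Game S (t + 1) a ≃ Σ u : Turn k S a, Game S t (move 1 a u) where
  toFun T := ⟨⟨T.1 0, (isGame_succ_iff.1 T.2).1⟩, fun j => T.1 (j + 1), (isGame_succ_iff.1 T.2).2⟩
  invFun p := ⟨fun | 0 => p.1.1 | j + 1 => p.2.1 j, isGame_succ_iff.2 ⟨p.1.2, p.2.2⟩⟩
  left_inv _ := Subtype.ext (funext (Nat.rec rfl fun _ _ => rfl))
  right_inv _ := rfl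

theorem final_succEquiv {a : Arrangement k n} (T : Game S (t + 1) a) :
    (succEquiv S t a T).2.final = T.final :=
  Subtype.ext (arrAfter_succ' a T t).symm

instance (a : Arrangement k n) : Unique (Game S 0 a) where
  default := ⟨fun _ _ => 0, fun _ hj => absurd hj (Nat.not_lt_zero _), fun _ _ => rfl⟩
  uniq T := Subtype.ext (funext fun j => T.2.2 j (Nat.zero_le j))

variable [NeZero k]

instance (S : Set ℕ) : ∀ (t : ℕ) (a : Arrangement k n), Finite (Game S t a)
  | 0, _ => inferInstance
  | t + 1, a =>
    have (u : Turn k S a) : Finite (Game S t (move 1 a u)) := instFinite S t _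
    .of_equiv _ (succEquiv S t a).symm

noncomputable instance (S : Set ℕ) (t : ℕ) (a : Arrangement k n) : Fintype (Game S t a) :=
  .ofFinite _

theorem sum_final (S : Set ℕ) (t : ℕ) (a : Arrangement k n) (f : Arrangement k n → ℕ) :
    ∑ T : Game S t a, f T.final = (turnMatrix k n S 1 ^ t *ᵥ f) a := by
  induction t generalizing a with
  | zero =>
    rw [Fintype.sum_unique, pow_zero, one_mulVec]
    rfl
  | succ t ih =>
    rw [pow_succ', ← mulVec_mulVec, turnMatrix_mulVec,
      Fintype.sum_equiv (succEquiv S t a) _ (fun p => f p.2.final)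
        fun T => by rw [final_succEquiv], Fintype.sum_sigma]
    exact Finset.sum_congr rfl fun u _ => ih (move 1 a u)

theorem card_eq_turnMatrix_pow_mulVec_one (S : Set ℕ) (t : ℕ) (a : Arrangement k n) :
    Nat.card (Game S t a) = (turnMatrix k n S 1 ^ t *ᵥ 1) a := by
  simp only [← sum_final, Pi.one_apply, Nat.card_eq_fintype_card, Finset.card_eq_sum_ones,
    Fintype.card]

theorem card_final_eq (S : Set ℕ) (t : ℕ) (a b : Arrangement k n) :
    Nat.card {T : Game S t a // T.final = b} = (turnMatrix k n S 1 ^ t) a b := by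
  have hsum := sum_final S t a (Pi.single b 1)
  rw [mulVec_single_one, col_apply] at hsum
  simp only [← hsum, Pi.single_apply, Finset.sum_boole, Nat.cast_id, Nat.card_eq_fintype_card,
    Fintype.card_subtype]

theorem card_eq_card_sigma_final_eq (S : Set ℕ) (t : ℕ) (a : Arrangement k n) :
    Nat.card (Game S t a) = Nat.card (Σ b : Arrangement k n, {T : Game S t b // T.final = a}) := by
  rw [card_eq_turnMatrix_pow_mulVec_one, turnMatrix_pow_mulVec_one, Nat.card_sigma]
  simp only [card_final_eq, vecMul, one_dotProduct]

end Game

end Game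

section CylPar

variable {k n : ℕ}

theorem total_Arr (α : CylPar k n) (m : ℕ) : (total m (Arr α) : ℤ) = α.f (-1) - α.f (m - 1) := by
  have hArr : ∀ i : ℕ, (Arr α i : ℤ) = α.f (i - 1) - α.f ((i + 1 : ℕ) - 1) := fun i => by
    have := α.antitone' (show (i : ℤ) - 1 ≤ i by omega)
    simp only [Arr, Nat.cast_succ, add_sub_cancel_right]
    omega
  rw [total, Nat.cast_sum, Finset.sum_congr rfl fun i _ => hArr i,
    Finset.sum_range_sub' fun i : ℕ => α.f (i - 1)]
  simp only [Nat.cast_zero, zero_sub]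

theorem isArrangement_Arr (α : CylPar k n) : IsArrangement k n (Arr α) := by
  refine ⟨fun i => ?_, ?_⟩
  · have hi := α.periodic' i
    have hpred := α.periodic' (i - 1)
    rw [sub_add_eq_add_sub] at hpred
    simp only [Arr]
    omega
  · have htotal := total_Arr α k
    have hperiod := α.periodic' (-1)
    rw [neg_add_eq_sub] at hperiod
    change total k (Arr α) = n - k
    omega

/-- `Arr α`, bundled as an arrangement. -/
abbrev CylPar.arrangement (α : CylPar k n) : Arrangement k n := ⟨Arr α, isArrangement_Arr α⟩

/-- The games ending at `a`, encoded as pairs of an initial arrangement and a sequence of turns as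
in `EndGames` and `EndGames1`. -/
def endEquiv (S : Set ℕ) (t : ℕ) (a : Arrangement k n) :
    {p : (ℤ → ℕ) × (ℕ → ℤ → ℕ) // IsArrangement k n p.1 ∧ IsGame k S t p.1 p.2 ∧
      arrAfter p.1 p.2 t = a} ≃ Σ b : Arrangement k n, {T : Game S t b // T.final = a} where
  toFun p := ⟨⟨p.1.1, p.2.1⟩, ⟨p.1.2, p.2.2.1⟩, Subtype.ext p.2.2.2⟩
  invFun q := ⟨(q.1, q.2.1), q.1.2, q.2.1.2, congrArg Subtype.val q.2.2⟩
  left_inv _ := rfl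
  right_inv _ := rfl

/-- `StartGames` as games with no restriction on the turns. -/
def startGamesEquiv (α : CylPar k n) (t : ℕ) :
    StartGames k n α t ≃ Game Set.univ t α.arrangement :=
  Equiv.subtypeEquivRight fun T => by simp only [IsGame, Set.mem_univ, and_true]

/-- `EndGames` as games with no restriction on the turns. -/
def endGamesEquiv (α : CylPar k n) (t : ℕ) :
    EndGames k n α t ≃
      Σ b : Arrangement k n, {T : Game Set.univ t b // T.final = α.arrangement} :=
  (Equiv.subtypeEquivRight fun p => by
    simp only [IsGame, Set.mem_univ, and_true, and_assoc]).trans (endEquiv Set.univ t _)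

/-- `StartGames1` as games with turns restricted to `{1}`. -/
def startGames1Equiv (α : CylPar k n) (t : ℕ) : StartGames1 k n α t ≃ Game {1} t α.arrangement :=
  Equiv.subtypeEquivRight fun T => by
    simp only [IsGame, total, Set.mem_singleton_iff, forall_and]
    tauto

/-- `EndGames1` as games with turns restricted to `{1}`. -/
def endGames1Equiv (α : CylPar k n) (t : ℕ) :
    EndGames1 k n α t ≃ Σ b : Arrangement k n, {T : Game {1} t b // T.final = α.arrangement} :=
  (Equiv.subtypeEquivRight fun p => by
    simp only [IsGame, total, Set.mem_singleton_iff, forall_and]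
    tauto).trans (endEquiv {1} t _)

theorem finite_and_card_eq_of_equiv [NeZero k] {S : Set ℕ} {t : ℕ} {a : Arrangement k n}
    {X Y : Type*} (eX : X ≃ Game S t a)
    (eY : Y ≃ Σ b : Arrangement k n, {T : Game S t b // T.final = a}) :
    Finite X ∧ Finite Y ∧ Nat.card X = Nat.card Y := by
  refine ⟨.of_equiv _ eX.symm, .of_equiv _ eY.symm, ?_⟩
  rw [Nat.card_congr eX, Nat.card_congr eY, Game.card_eq_card_sigma_final_eq]

end CylPar

end CylCount

/-- the number of marble games of length `t` with initial
arrangement `Arr(α)` equals the number of marble games of length `t` with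
final arrangement `Arr(α)` (both collections are finite); the same holds when
both collections are restricted to games in which exactly one marble changes
hands on every turn. -/
theorem stmt16 (k n : ℕ) (hk : 0 < k) (hkn : k < n) (α : CylPar k n) (t : ℕ) :
    Finite (StartGames k n α t) ∧ Finite (EndGames k n α t) ∧
    Nat.card (StartGames k n α t) = Nat.card (EndGames k n α t) ∧
    Finite (StartGames1 k n α t) ∧ Finite (EndGames1 k n α t) ∧
    Nat.card (StartGames1 k n α t) = Nat.card (EndGames1 k n α t) := by
  have : NeZero k := ⟨hk.ne'⟩
  obtain ⟨hstart, hend, hcard⟩ :=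
    finite_and_card_eq_of_equiv (startGamesEquiv α t) (endGamesEquiv α t)
  obtain ⟨hstart₁, hend₁, hcard₁⟩ :=
    finite_and_card_eq_of_equiv (startGames1Equiv α t) (endGames1Equiv α t)
  exact ⟨hstart, hend, hcard, hstart₁, hend₁, hcard₁⟩
end

section
/- (Skew Cauchy identity, coefficient form) Let α and β be partitions and let f, g : {1,2,…} → ℕ be finitely supported functions. Then the number of 6-tuples (μ, γ, T, U, V, W), where μ is a partition with μ ⊆ α and μ ⊆ β, γ is a partition, T is an SSYT of shape α/μ, U is an SSYT of shape β/μ, V and W are SSYT of straight shape γ, and wt(T) + wt(V) = f and wt(U) + wt(W) = g, equals the number of triples (λ, P, Q), where λ is a partition with α ⊆ λ and β ⊆ λ, P is an SSYT of shape λ/β with wt(P) = f, and Q is an SSYT of shape λ/α with wt(Q) = g. (This is the coefficient-of-x^f·y^g form of the identity Σ_μ s_{α/μ}(x) s_{β/μ}(y) · Σ_γ s_γ(x) s_γ(y) = Σ_λ s_{λ/β}(x) s_{λ/α}(y).) -/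
namespace SkewYT

/-- A partition: a weakly decreasing function `ℕ → ℕ`, eventually zero
(rows indexed `0, 1, 2, …`). -/
def IsPartition (f : ℕ → ℕ) : Prop :=
  (∀ ⦃i j : ℕ⦄, i ≤ j → f j ≤ f i) ∧ ∃ N, ∀ i ≥ N, f i = 0

/-- A semistandard skew Young tableau of shape `λ/μ`: a map from the cells
`{(i,j) : μ i < j ≤ λ i}` to the positive integers, with weakly increasing
rows and strictly increasing columns. -/
structure SSYT (μ lam : ℕ → ℕ) where
  entry : ∀ i j : ℕ, μ i < j → j ≤ lam i → ℕ+
  row_weak : ∀ i j₁ j₂ h₁ h₂ h₃ h₄, j₁ < j₂ →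
    entry i j₁ h₁ h₂ ≤ entry i j₂ h₃ h₄
  col_strict : ∀ i₁ i₂ j h₁ h₂ h₃ h₄, i₁ < i₂ →
    entry i₁ j h₁ h₂ < entry i₂ j h₃ h₄

/-- The weight of a skew tableau: the number of cells carrying the letter `a`. -/
noncomputable def wtY {μ lam : ℕ → ℕ} (T : SSYT μ lam) (a : ℕ+) : ℕ :=
  Nat.card {p : ℕ × ℕ //
    ∃ (h₁ : μ p.1 < p.2) (h₂ : p.2 ≤ lam p.1), T.entry p.1 p.2 h₁ h₂ = a}

end SkewYT

open SkewYT

/-!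
Read a tableau of shape `λ/μ` as a chain of horizontal strips from `μ` to `λ`, one for each
letter. For two single strips, Fomin's local rule `μᵢ + λᵢ₊₁ = min(αᵢ, βᵢ) + max(αᵢ₊₁, βᵢ₊₁)`
matches the partitions `λ` completing a corner `α, β` from above with pairs of a partition `μ`
completing it from below and a free label `k = λ₀ - max(α₀, β₀)`. Such rules can be stacked, so
filling a grid of squares gives one for pairs of tableaux with bounded letters. Its set of labels
does not depend on the corner. At `α = β = ∅` the only completion from below is trivial, so labels
correspond to pairs of tableaux of a common straight shape.
-/

namespace SkewYT

/-! ### Weighted quivers and growth rules -/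

section GrowthRules

universe u

variable {V : Type u} {W W' : Type*}

/-- A quiver on the vertices `V` whose arrows carry weights in `W`: the common form of horizontal
strips and of tableaux, both seen as arrows from the inner to the outer partition. -/
structure WeightedQuiver (V : Type u) (W : Type*) where
  Hom : V → V → Type u
  wt : ∀ {μ ν : V}, Hom μ ν → W

namespace WeightedQuiver

/-- The quiver with exactly one loop at each vertex, of weight `0`. -/
def identity (V : Type u) (W : Type*) [Zero W] : WeightedQuiver V W where
  Hom μ ν := ULift (PLift (μ = ν))
  wt _ := 0

/-- The quiver of paths made of an arrow of `A` followed by an arrow of `A'`; weights add. -/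
def comp [Add W] (A A' : WeightedQuiver V W) : WeightedQuiver V W where
  Hom μ lam := Σ ν : V, A.Hom μ ν × A'.Hom ν lam
  wt x := A.wt x.2.1 + A'.wt x.2.2

/-- A weight-preserving isomorphism of quivers that fixes the vertices. -/
structure Iso (A A' : WeightedQuiver V W) where
  equiv : ∀ μ ν : V, A.Hom μ ν ≃ A'.Hom μ ν
  wt_equiv : ∀ {μ ν : V} (x : A.Hom μ ν), A'.wt (equiv μ ν x) = A.wt x

/-- A completion of the corner `α, β` from above: an arrow `β ⟶ apex` of `A` and an arrow
`α ⟶ apex` of `B`. -/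
structure Cospan (A : WeightedQuiver V W) (B : WeightedQuiver V W') (α β : V) where
  apex : V
  left : A.Hom β apex
  right : B.Hom α apex

/-- A completion of the corner `α, β` from below: an arrow `base ⟶ α` of `A` and an arrow
`base ⟶ β` of `B`. Thus `A`-arrows are opposite sides of a square, and so are `B`-arrows. -/
structure Span (A : WeightedQuiver V W) (B : WeightedQuiver V W') (α β : V) where
  base : V
  left : A.Hom base α
  right : B.Hom base β

variable {A A' : WeightedQuiver V W} {B : WeightedQuiver V W'} {α β : V}

/-- The weights of the two arrows of a cospan. -/
def Cospan.wt (x : Cospan A B α β) : W × W' := (A.wt x.left, B.wt x.right)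

/-- The weights of the two arrows of a span. -/
def Span.wt (x : Span A B α β) : W × W' := (A.wt x.left, B.wt x.right)

def Cospan.swapEquiv : Cospan A B α β ≃ Cospan B A β α where
  toFun x := ⟨x.apex, x.right, x.left⟩
  invFun x := ⟨x.apex, x.right, x.left⟩
  left_inv _ := rfl
  right_inv _ := rfl

def Span.swapEquiv : Span A B α β ≃ Span B A β α where
  toFun x := ⟨x.base, x.right, x.left⟩
  invFun x := ⟨x.base, x.right, x.left⟩
  left_inv _ := rfl
  right_inv _ := rfl

def Cospan.congrLeft (i : Iso A A') : Cospan A B α β ≃ Cospan A' B α β where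
  toFun x := ⟨x.apex, i.equiv _ _ x.left, x.right⟩
  invFun x := ⟨x.apex, (i.equiv _ _).symm x.left, x.right⟩
  left_inv x := by simp
  right_inv x := by simp

def Span.congrLeft (i : Iso A A') : Span A B α β ≃ Span A' B α β where
  toFun x := ⟨x.base, i.equiv _ _ x.left, x.right⟩
  invFun x := ⟨x.base, (i.equiv _ _).symm x.left, x.right⟩
  left_inv x := by simp
  right_inv x := by simp

theorem Cospan.wt_congrLeft (i : Iso A A') (x : Cospan A B α β) : (congrLeft i x).wt = x.wt :=
  Prod.ext (i.wt_equiv x.left) rfl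

theorem Span.wt_congrLeft (i : Iso A A') (x : Span A B α β) : (congrLeft i x).wt = x.wt :=
  Prod.ext (i.wt_equiv x.left) rfl

def Cospan.identityEquiv [Zero W] : Cospan (identity V W) B α β ≃ B.Hom α β where
  toFun | ⟨_, ⟨⟨rfl⟩⟩, b⟩ => b
  invFun b := ⟨β, ⟨⟨rfl⟩⟩, b⟩
  left_inv | ⟨_, ⟨⟨rfl⟩⟩, _⟩ => rfl
  right_inv _ := rfl

def Span.identityEquiv [Zero W] : Span (identity V W) B α β ≃ B.Hom α β where
  toFun | ⟨_, ⟨⟨rfl⟩⟩, b⟩ => b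
  invFun b := ⟨α, ⟨⟨rfl⟩⟩, b⟩
  left_inv | ⟨_, ⟨⟨rfl⟩⟩, _⟩ => rfl
  right_inv _ := rfl

def Cospan.compEquiv [Add W] :
    Cospan (A.comp A') B α β ≃ Σ ν : V, A.Hom β ν × Cospan A' B α ν where
  toFun x := ⟨x.left.1, x.left.2.1, x.apex, x.left.2.2, x.right⟩
  invFun x := ⟨x.2.2.apex, ⟨x.1, x.2.1, x.2.2.left⟩, x.2.2.right⟩
  left_inv _ := rfl
  right_inv _ := rfl

def Span.compEquiv [Add W] :
    Span (A.comp A') B α β ≃ Σ κ : V, A'.Hom κ α × Span A B κ β where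
  toFun x := ⟨x.left.1, x.left.2.2, x.base, x.left.2.1, x.right⟩
  invFun x := ⟨x.2.2.base, ⟨x.1, x.2.2.left, x.2.1⟩, x.2.2.right⟩
  left_inv _ := rfl
  right_inv _ := rfl

/-- The two ways to read a zigzag `β ⟶ ν ⟵ κ ⟶ α` of arrows of `A`, `B` and `A'`: as an `A`-arrow
followed by a span, or as an `A'`-arrow preceded by a cospan. -/
def zigzagEquiv :
    (Σ ν : V, A.Hom β ν × Span A' B α ν) ≃ Σ κ : V, A'.Hom κ α × Cospan A B κ β where
  toFun x := ⟨x.2.2.base, x.2.2.left, x.1, x.2.1, x.2.2.right⟩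
  invFun x := ⟨x.2.2.apex, x.2.2.left, x.1, x.2.1, x.2.2.right⟩
  left_inv _ := rfl
  right_inv _ := rfl

end WeightedQuiver

open WeightedQuiver

/-- A growth rule identifies the completions of each corner from above with the labelled completions
from below. The labels are the same for all corners, which makes this the bijective form of a
commutation relation `D U = K · U D` with a scalar `K`, the generating function of the labels. -/
structure GrowthRule [Add W] [Add W'] (A : WeightedQuiver V W) (B : WeightedQuiver V W') where
  Label : Type u
  labelWt : Label → W × W'
  equiv : ∀ α β : V, Cospan A B α β ≃ Span A B α β × Label
  wt_eq : ∀ {α β : V} (x : Cospan A B α β),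
    x.wt = (equiv α β x).1.wt + labelWt (equiv α β x).2

def sigmaProdAssoc {ι : Type*} {X Y : ι → Type*} {Z : Type*} :
    (Σ i, X i × (Y i × Z)) ≃ (Σ i, X i × Y i) × Z :=
  (Equiv.sigmaCongrRight fun i => (Equiv.prodAssoc (X i) (Y i) Z).symm).trans
    (Equiv.sigmaProdDistrib _ Z).symm

namespace GrowthRule

/-- A growth rule read with the two corners `α`, `β` and the two quivers interchanged. -/
def swap [Add W] [Add W'] {A : WeightedQuiver V W} {B : WeightedQuiver V W'}
    (E : GrowthRule A B) : GrowthRule B A where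
  Label := E.Label
  labelWt l := (E.labelWt l).swap
  equiv α β := (Cospan.swapEquiv.trans (E.equiv β α)).trans
    (Span.swapEquiv.prodCongr (Equiv.refl _))
  wt_eq x := congrArg Prod.swap (E.wt_eq (Cospan.swapEquiv x))

/-- Transport of a growth rule along an isomorphism of the first quiver. -/
def congr [Add W] [Add W'] {A A' : WeightedQuiver V W} {B : WeightedQuiver V W'}
    (E : GrowthRule A B) (i : Iso A A') : GrowthRule A' B where
  Label := E.Label
  labelWt := E.labelWt
  equiv α β := ((Cospan.congrLeft i).symm.trans (E.equiv α β)).trans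
    ((Span.congrLeft i).prodCongr (Equiv.refl _))
  wt_eq x := by
    obtain ⟨y, rfl⟩ := (Cospan.congrLeft i).surjective x
    simp only [Equiv.trans_apply, Equiv.symm_apply_apply, Equiv.prodCongr_apply, Prod.map_fst,
      Prod.map_snd, Equiv.refl_apply, Cospan.wt_congrLeft, Span.wt_congrLeft]
    exact E.wt_eq y

/-- The growth rule of degenerate squares, whose `A`-sides are loops; it has a single label. -/
def identity [AddZeroClass W] [AddZeroClass W'] (B : WeightedQuiver V W') :
    GrowthRule (WeightedQuiver.identity V W) B where
  Label := PUnit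
  labelWt _ := 0
  equiv _ _ := (Cospan.identityEquiv.trans Span.identityEquiv.symm).trans
    (Equiv.prodPUnit _).symm
  wt_eq | ⟨_, ⟨⟨rfl⟩⟩, _⟩ => (add_zero _).symm

/-- Growth rules for `A` and `A'` stack into one for paths: the square of `A'` is filled first, and
the `B`-arrow it produces is a side of the square of `A`. -/
def comp [AddCommSemigroup W] [AddSemigroup W'] {A A' : WeightedQuiver V W}
    {B : WeightedQuiver V W'} (E : GrowthRule A B) (E' : GrowthRule A' B) :
    GrowthRule (A.comp A') B where
  Label := E.Label × E'.Label
  labelWt l := E.labelWt l.1 + E'.labelWt l.2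
  equiv α β := calc
    Cospan (A.comp A') B α β
      ≃ Σ ν : V, A.Hom β ν × Cospan A' B α ν := Cospan.compEquiv
    _ ≃ Σ ν : V, A.Hom β ν × (Span A' B α ν × E'.Label) :=
        Equiv.sigmaCongrRight fun ν => (Equiv.refl _).prodCongr (E'.equiv α ν)
    _ ≃ (Σ ν : V, A.Hom β ν × Span A' B α ν) × E'.Label := sigmaProdAssoc
    _ ≃ (Σ κ : V, A'.Hom κ α × Cospan A B κ β) × E'.Label :=
        zigzagEquiv.prodCongr (Equiv.refl _)
    _ ≃ (Σ κ : V, A'.Hom κ α × (Span A B κ β × E.Label)) × E'.Label :=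
        (Equiv.sigmaCongrRight fun κ => (Equiv.refl _).prodCongr (E.equiv κ β)).prodCongr
          (Equiv.refl _)
    _ ≃ ((Σ κ : V, A'.Hom κ α × Span A B κ β) × E.Label) × E'.Label :=
        sigmaProdAssoc.prodCongr (Equiv.refl _)
    _ ≃ (Span (A.comp A') B α β × E.Label) × E'.Label :=
        (Span.compEquiv.symm.prodCongr (Equiv.refl _)).prodCongr (Equiv.refl _)
    _ ≃ Span (A.comp A') B α β × (E.Label × E'.Label) := Equiv.prodAssoc _ _ _
  wt_eq {α β} := by
    rintro ⟨lam, ⟨ν, a, a'⟩, b⟩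
    have upper := E'.wt_eq ⟨lam, a', b⟩
    set y := E'.equiv α ν ⟨lam, a', b⟩
    have lower := E.wt_eq ⟨ν, a, y.1.right⟩
    simp only [Cospan.wt, Span.wt, Prod.ext_iff, Prod.fst_add, Prod.snd_add] at upper lower
    refine Prod.ext ?_ ?_
    · change A.wt a + A'.wt a' = _
      rw [upper.1, lower.1]
      exact add_add_add_comm _ _ _ _
    · change B.wt b = _
      rw [upper.2, lower.2]
      exact add_assoc _ _ _

section Card

variable [AddMonoid W] [AddMonoid W'] {A : WeightedQuiver V W} {B : WeightedQuiver V W'}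
  {o : V} [Unique (Span A B o o)]

/-- At a vertex whose only span is trivial, a growth rule identifies cospans with labels. -/
def cospanEquivLabel (E : GrowthRule A B) : Cospan A B o o ≃ E.Label :=
  (E.equiv o o).trans (Equiv.uniqueProd _ _)

theorem labelWt_cospanEquivLabel (E : GrowthRule A B) (hwt : (default : Span A B o o).wt = 0)
    (x : Cospan A B o o) : E.labelWt (E.cospanEquivLabel x) = x.wt := by
  rw [E.wt_eq x, Unique.eq_default (E.equiv o o x).1, hwt, zero_add]
  rfl

theorem card_span_prod_cospan_eq_card_cospan (E : GrowthRule A B)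
    (hwt : (default : Span A B o o).wt = 0) (α β : V) (w : W × W') :
    Nat.card {x : Span A B α β × Cospan A B o o // x.1.wt + x.2.wt = w} =
      Nat.card {y : Cospan A B α β // y.wt = w} := by
  let e : Span A B α β × Cospan A B o o ≃ Cospan A B α β :=
    ((Equiv.refl _).prodCongr E.cospanEquivLabel).trans (E.equiv α β).symm
  have wt_e (x) : (e x).wt = x.1.wt + x.2.wt := by
    rw [E.wt_eq, ← E.labelWt_cospanEquivLabel hwt x.2]
    simp [e]
  exact Nat.card_congr (e.subtypeEquiv fun x => by rw [wt_e])

end Card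

end GrowthRule

end GrowthRules

open WeightedQuiver

/-! ### Horizontal strips -/

/-- Bundled partitions. -/
abbrev Shape := {h : ℕ → ℕ // IsPartition h}

/-- The cells of the skew diagram `λ/μ`; as in `SSYT`, rows count from `0`, columns from `1`. -/
def skewCells (μ lam : ℕ → ℕ) : Set (ℕ × ℕ) := {p | μ p.1 < p.2 ∧ p.2 ≤ lam p.1}

/-- The number of cells of the skew diagram `λ/μ`. -/
noncomputable def skewSize (μ lam : ℕ → ℕ) : ℕ := (skewCells μ lam).ncard

/-- `λ/μ` is a horizontal strip: `μ ⊆ λ` and no column of `λ/μ` has two cells. Stated as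
interlacing of the two sequences, it makes sense for arbitrary functions. -/
def IsHorizontalStrip (μ lam : ℕ → ℕ) : Prop := ∀ i, μ i ≤ lam i ∧ lam (i + 1) ≤ μ i

theorem skewCells_eq_map_sigma (μ : ℕ → ℕ) {lam : ℕ → ℕ} {N : ℕ} (hN : ∀ i ≥ N, lam i = 0) :
    skewCells μ lam = ((Finset.range N).sigma fun i => Finset.Ioc (μ i) (lam i)).map
      (Equiv.sigmaEquivProd ℕ ℕ).toEmbedding := by
  ext ⟨i, j⟩
  have row_lt (h₁ : μ i < j) (h₂ : j ≤ lam i) : i < N := by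
    by_contra hi
    have := hN i (not_lt.mp hi)
    omega
  simpa [skewCells] using row_lt

theorem finite_skewCells (μ : ℕ → ℕ) {lam : ℕ → ℕ} (hlam : IsPartition lam) :
    (skewCells μ lam).Finite := by
  obtain ⟨N, hN⟩ := hlam.2
  exact skewCells_eq_map_sigma μ hN ▸ Finset.finite_toSet _

theorem skewSize_eq_sum (μ : ℕ → ℕ) {lam : ℕ → ℕ} {N : ℕ} (hN : ∀ i ≥ N, lam i = 0) :
    skewSize μ lam = ∑ i ∈ Finset.range N, (lam i - μ i) := by
  rw [skewSize, skewCells_eq_map_sigma μ hN, Set.ncard_coe_finset, Finset.card_map,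
    Finset.card_sigma]
  simp only [Nat.card_Ioc]

namespace IsHorizontalStrip

variable {μ lam : ℕ → ℕ}

theorem antitone_inner (h : IsHorizontalStrip μ lam) : Antitone μ :=
  antitone_nat_of_succ_le fun i => (h (i + 1)).1.trans (h i).2

theorem antitone_outer (h : IsHorizontalStrip μ lam) : Antitone lam :=
  antitone_nat_of_succ_le fun i => (h i).2.trans (h i).1

theorem isPartition_inner (h : IsHorizontalStrip μ lam) (hlam : IsPartition lam) :
    IsPartition μ := by
  obtain ⟨N, hN⟩ := hlam.2
  exact ⟨h.antitone_inner, N, fun i hi => Nat.le_zero.mp (hN i hi ▸ (h i).1)⟩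

theorem isPartition_outer (h : IsHorizontalStrip μ lam) (hμ : IsPartition μ) :
    IsPartition lam := by
  obtain ⟨N, hN⟩ := hμ.2
  refine ⟨h.antitone_outer, N + 1, fun i hi => ?_⟩
  obtain ⟨i, rfl⟩ := Nat.exists_eq_add_of_le' (Nat.one_le_of_lt hi)
  exact Nat.le_zero.mp (hN i (Nat.le_of_succ_le_succ hi) ▸ (h i).2)

end IsHorizontalStrip

/-! ### Fomin's local rule -/

/-- The lower corner of the square with sides `α`, `β` and upper corner `λ`, by Fomin's local rule.
The subtraction is not truncated when `λ/α` and `λ/β` are horizontal strips. -/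
def lowerCorner (α β lam : ℕ → ℕ) (i : ℕ) : ℕ :=
  min (α i) (β i) + max (α (i + 1)) (β (i + 1)) - lam (i + 1)

/-- The upper corner of the square with sides `α`, `β`, lower corner `μ` and label `k`. The
subtraction is not truncated when `α/μ` and `β/μ` are horizontal strips. -/
def upperCorner (α β μ : ℕ → ℕ) (k : ℕ) : ℕ → ℕ
  | 0 => max (α 0) (β 0) + k
  | i + 1 => min (α i) (β i) + max (α (i + 1)) (β (i + 1)) - μ i

theorem lowerCorner_comm (α β lam : ℕ → ℕ) : lowerCorner α β lam = lowerCorner β α lam := by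
  funext i
  simp only [lowerCorner, min_comm, max_comm]

theorem upperCorner_comm (α β μ : ℕ → ℕ) (k : ℕ) :
    upperCorner α β μ k = upperCorner β α μ k := by
  funext i
  cases i <;> simp only [upperCorner, min_comm, max_comm]

section LocalRule

variable {α β μ lam : ℕ → ℕ}

theorem isHorizontalStrip_lowerCorner (hα : IsHorizontalStrip α lam)
    (hβ : IsHorizontalStrip β lam) : IsHorizontalStrip (lowerCorner α β lam) α := by
  intro i
  have := hα i
  have := hβ i
  have := hα (i + 1)
  have := hβ (i + 1)
  simp only [lowerCorner]
  omega

theorem isHorizontalStrip_upperCorner (hα : IsHorizontalStrip μ α) (hβ : IsHorizontalStrip μ β)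
    (k : ℕ) : IsHorizontalStrip α (upperCorner α β μ k) := by
  intro i
  have := hα i
  have := hβ i
  have := hα (i + 1)
  have := hβ (i + 1)
  constructor
  · cases i with
    | zero => simp only [upperCorner]; omega
    | succ i =>
      have := hα i
      have := hβ i
      simp only [upperCorner]
      omega
  · simp only [upperCorner]
    omega

theorem lowerCorner_upperCorner (hα : IsHorizontalStrip μ α) (hβ : IsHorizontalStrip μ β)
    (k : ℕ) : lowerCorner α β (upperCorner α β μ k) = μ := by
  funext i
  have := hα i
  have := hβ i
  simp only [lowerCorner, upperCorner]
  omega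

theorem upperCorner_lowerCorner (hα : IsHorizontalStrip α lam) (hβ : IsHorizontalStrip β lam) :
    upperCorner α β (lowerCorner α β lam) (lam 0 - max (α 0) (β 0)) = lam := by
  funext i
  cases i with
  | zero =>
    have := hα 0
    have := hβ 0
    simp only [upperCorner]
    omega
  | succ i =>
    have := hα i
    have := hβ i
    have := hα (i + 1)
    have := hβ (i + 1)
    simp only [upperCorner, lowerCorner]
    omega

theorem sum_range_succ_sub_eq_lowerCorner (hα : IsHorizontalStrip α lam)
    (hβ : IsHorizontalStrip β lam) (n : ℕ) :
    ∑ i ∈ Finset.range (n + 1), (lam i - β i) =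
      ∑ i ∈ Finset.range n, (α i - lowerCorner α β lam i) + (lam 0 - max (α 0) (β 0)) +
        (α n - β n) := by
  induction n with
  | zero =>
    have := hα 0
    have := hβ 0
    simp only [zero_add, Finset.sum_range_one, Finset.sum_range_zero]
    omega
  | succ n ih =>
    rw [Finset.sum_range_succ, ih, Finset.sum_range_succ]
    have := hα n
    have := hβ n
    have := hα (n + 1)
    have := hβ (n + 1)
    simp only [lowerCorner]
    omega

theorem skewSize_eq_skewSize_lowerCorner_add (hlam : IsPartition lam)
    (hα : IsHorizontalStrip α lam) (hβ : IsHorizontalStrip β lam) :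
    skewSize β lam = skewSize (lowerCorner α β lam) α + (lam 0 - max (α 0) (β 0)) := by
  obtain ⟨N, hN⟩ := hlam.2
  have hαN : ∀ i ≥ N, α i = 0 := fun i hi => Nat.le_zero.mp (hN i hi ▸ (hα i).1)
  rw [skewSize_eq_sum β fun i (hi : i ≥ N + 1) => hN i (Nat.le_of_succ_le hi),
    skewSize_eq_sum _ hαN, sum_range_succ_sub_eq_lowerCorner hα hβ, hαN N le_rfl, Nat.zero_sub,
    add_zero]

end LocalRule

/-- The quiver of horizontal strips, each cell of which is filled with the letter `a`. -/
noncomputable def stripQuiver (a : ℕ+) : WeightedQuiver Shape (ℕ+ → ℕ) where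
  Hom μ lam := PLift (IsHorizontalStrip μ.1 lam.1)
  wt {μ lam} _ := Pi.single a (skewSize μ.1 lam.1)

section StripRule

variable {a b : ℕ+} {α β : Shape}

theorem stripCospan_ext {x y : Cospan (stripQuiver a) (stripQuiver b) α β}
    (h : x.apex.1 = y.apex.1) : x = y := by
  obtain ⟨lam, ⟨_⟩, ⟨_⟩⟩ := x
  obtain ⟨lam', ⟨_⟩, ⟨_⟩⟩ := y
  obtain rfl : lam = lam' := Subtype.ext h
  rfl

theorem stripSpan_ext {x y : Span (stripQuiver a) (stripQuiver b) α β}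
    (h : x.base.1 = y.base.1) : x = y := by
  obtain ⟨μ, ⟨_⟩, ⟨_⟩⟩ := x
  obtain ⟨μ', ⟨_⟩, ⟨_⟩⟩ := y
  obtain rfl : μ = μ' := Subtype.ext h
  rfl

/-- Fomin's local rule applied downwards to a pair of strips, forgetting the label. -/
def lowerStripSpan (x : Cospan (stripQuiver a) (stripQuiver b) α β) :
    Span (stripQuiver a) (stripQuiver b) α β :=
  have toα : IsHorizontalStrip (lowerCorner α.1 β.1 x.apex.1) α.1 :=
    isHorizontalStrip_lowerCorner x.right.down x.left.down
  have toβ : IsHorizontalStrip (lowerCorner α.1 β.1 x.apex.1) β.1 :=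
    lowerCorner_comm β.1 α.1 _ ▸ isHorizontalStrip_lowerCorner x.left.down x.right.down
  ⟨⟨_, toα.isPartition_inner α.2⟩, ⟨toα⟩, ⟨toβ⟩⟩

/-- Fomin's local rule applied upwards to a pair of strips and the label `k`. -/
def upperStripCospan (x : Span (stripQuiver a) (stripQuiver b) α β) (k : ℕ) :
    Cospan (stripQuiver a) (stripQuiver b) α β :=
  have fromα : IsHorizontalStrip α.1 (upperCorner α.1 β.1 x.base.1 k) :=
    isHorizontalStrip_upperCorner x.left.down x.right.down k
  have fromβ : IsHorizontalStrip β.1 (upperCorner α.1 β.1 x.base.1 k) :=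
    upperCorner_comm β.1 α.1 _ k ▸ isHorizontalStrip_upperCorner x.right.down x.left.down k
  ⟨⟨_, fromα.isPartition_outer α.2⟩, ⟨fromβ⟩, ⟨fromα⟩⟩

end StripRule

/-- Fomin's local rule as a growth rule between strips of two letters. -/
noncomputable def stripRule (a b : ℕ+) : GrowthRule (stripQuiver a) (stripQuiver b) where
  Label := ℕ
  labelWt k := (Pi.single a k, Pi.single b k)
  equiv α β :=
    { toFun x := (lowerStripSpan x, x.apex.1 0 - max (α.1 0) (β.1 0))
      invFun x := upperStripCospan x.1 x.2
      left_inv x := stripCospan_ext (upperCorner_lowerCorner x.right.down x.left.down)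
      right_inv x := Prod.ext
        (stripSpan_ext (lowerCorner_upperCorner x.1.left.down x.1.right.down x.2))
        (Nat.add_sub_cancel_left ..) }
  wt_eq {α β} := by
    rintro ⟨lam, ⟨hβ⟩, ⟨hα⟩⟩
    refine Prod.ext ?_ ?_
    · change (Pi.single a (skewSize β.1 lam.1) : ℕ+ → ℕ) =
        Pi.single a (skewSize (lowerCorner α.1 β.1 lam.1) α.1) +
          Pi.single a (lam.1 0 - max (α.1 0) (β.1 0))
      rw [← Pi.single_add, skewSize_eq_skewSize_lowerCorner_add lam.2 hα hβ]
    · change (Pi.single b (skewSize α.1 lam.1) : ℕ+ → ℕ) =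
        Pi.single b (skewSize (lowerCorner α.1 β.1 lam.1) β.1) +
          Pi.single b (lam.1 0 - max (α.1 0) (β.1 0))
      rw [← Pi.single_add, skewSize_eq_skewSize_lowerCorner_add lam.2 hβ hα, lowerCorner_comm,
        max_comm]

/-! ### Tableaux as chains of horizontal strips -/

namespace SSYT

variable {μ ν lam : ℕ → ℕ} {n : ℕ}

theorem ext_entry {S T : SSYT μ lam} (h : ∀ i j h₁ h₂, S.entry i j h₁ h₂ = T.entry i j h₁ h₂) :
    S = T := by
  cases S
  cases T
  congr
  funext i j h₁ h₂
  exact h i j h₁ h₂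

instance : Subsingleton (SSYT μ μ) :=
  ⟨fun _ _ => ext_entry fun _ _ h₁ h₂ => absurd h₁ h₂.not_gt⟩

/-- The cells of `T` that carry the letter `a`. -/
def letterCells (T : SSYT μ lam) (a : ℕ+) : Set (ℕ × ℕ) :=
  {p | ∃ (h₁ : μ p.1 < p.2) (h₂ : p.2 ≤ lam p.1), T.entry p.1 p.2 h₁ h₂ = a}

theorem wtY_eq_ncard_letterCells (T : SSYT μ lam) (a : ℕ+) : wtY T a = (T.letterCells a).ncard :=
  rfl

theorem wtY_entry_ne_zero (hlam : IsPartition lam) (T : SSYT μ lam) {i j : ℕ} (h₁ : μ i < j)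
    (h₂ : j ≤ lam i) : wtY T (T.entry i j h₁ h₂) ≠ 0 := by
  have hfin : (T.letterCells (T.entry i j h₁ h₂)).Finite :=
    (finite_skewCells μ hlam).subset fun _ ⟨h₁, h₂, _⟩ => ⟨h₁, h₂⟩
  rw [wtY_eq_ncard_letterCells]
  exact Set.ncard_ne_zero_of_mem (a := (i, j)) ⟨h₁, h₂, rfl⟩ hfin

/-- All letters of `T` are at most `n`. -/
def LettersLE (T : SSYT μ lam) (n : ℕ) : Prop := ∀ i j h₁ h₂, (T.entry i j h₁ h₂ : ℕ) ≤ n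

theorem LettersLE.letterCells_eq_empty {T : SSYT μ lam} (hT : T.LettersLE n) {a : ℕ+}
    (ha : n < a) : T.letterCells a = ∅ :=
  Set.eq_empty_of_forall_notMem fun _ ⟨h₁, h₂, h⟩ => (h ▸ hT _ _ h₁ h₂).not_gt ha

theorem lettersLE_of_wtY_le (hlam : IsPartition lam) (T : SSYT μ lam) {f : ℕ+ → ℕ}
    (hf : ∀ a : ℕ+, n < a → f a = 0) (hT : ∀ a, wtY T a ≤ f a) : T.LettersLE n := by
  intro i j h₁ h₂
  by_contra hn
  have hwt := hT (T.entry i j h₁ h₂)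
  rw [hf _ (not_le.mp hn)] at hwt
  exact T.wtY_entry_ne_zero hlam h₁ h₂ (Nat.le_zero.mp hwt)

/-- The tableau obtained from `S`, with letters at most `n`, by filling the cells of the horizontal
strip `λ/ν` with the letter `n + 1`. -/
def addStrip (S : SSYT μ ν) (hS : S.LettersLE n) (hν : IsHorizontalStrip ν lam) : SSYT μ lam where
  entry i j h₁ _ := if h : j ≤ ν i then S.entry i j h₁ h else n.succPNat
  row_weak i j₁ j₂ h₁ _ h₃ _ hj := by
    split_ifs with hj₁ hj₂
    · exact S.row_weak _ _ _ _ _ _ _ hj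
    · exact PNat.coe_le_coe _ _ |>.mp ((hS _ _ _ _).trans n.le_succ)
    · omega
    · exact le_rfl
  col_strict i₁ i₂ j h₁ _ h₃ h₄ hi := by
    have hj : j ≤ ν i₁ := h₄.trans ((hν.antitone_outer hi).trans (hν i₁).2)
    rw [dif_pos hj]
    split_ifs
    · exact S.col_strict _ _ _ _ _ _ _ hi
    · exact PNat.coe_lt_coe _ _ |>.mp (Nat.lt_succ_of_le (hS _ _ _ _))

section AddStrip

variable {S : SSYT μ ν} (hS : S.LettersLE n) (hν : IsHorizontalStrip ν lam)

theorem addStrip_entry_of_le {i j : ℕ} (h₁ : μ i < j) (h₂ : j ≤ lam i) (hj : j ≤ ν i) :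
    (S.addStrip hS hν).entry i j h₁ h₂ = S.entry i j h₁ hj :=
  dif_pos hj

theorem addStrip_entry_of_lt {i j : ℕ} (h₁ : μ i < j) (h₂ : j ≤ lam i) (hj : ν i < j) :
    (S.addStrip hS hν).entry i j h₁ h₂ = n.succPNat :=
  dif_neg hj.not_ge

theorem addStrip_entry_le_iff {i j : ℕ} (h₁ : μ i < j) (h₂ : j ≤ lam i) :
    ((S.addStrip hS hν).entry i j h₁ h₂ : ℕ) ≤ n ↔ j ≤ ν i := by
  rcases le_or_gt j (ν i) with hj | hj
  · simp only [addStrip_entry_of_le hS hν h₁ h₂ hj, hj, iff_true]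
    exact hS i j h₁ hj
  · simp [addStrip_entry_of_lt hS hν h₁ h₂ hj, hj]

theorem lettersLE_addStrip : (S.addStrip hS hν).LettersLE (n + 1) := by
  intro i j h₁ h₂
  rcases le_or_gt j (ν i) with hj | hj
  · exact ((addStrip_entry_le_iff hS hν h₁ h₂).mpr hj).trans n.le_succ
  · exact (congrArg PNat.val (addStrip_entry_of_lt hS hν h₁ h₂ hj)).le

theorem letterCells_addStrip_succ (hμ : ∀ i, μ i ≤ ν i) :
    (S.addStrip hS hν).letterCells n.succPNat = skewCells ν lam := by
  ext ⟨i, j⟩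
  constructor
  · rintro ⟨h₁, h₂, h⟩
    refine ⟨lt_of_not_ge fun hj => ?_, h₂⟩
    have := (addStrip_entry_le_iff hS hν h₁ h₂).mpr hj
    rw [h] at this
    exact n.lt_succ_self.not_ge this
  · rintro ⟨hj, h₂⟩
    exact ⟨(hμ i).trans_lt hj, h₂, addStrip_entry_of_lt hS hν _ h₂ hj⟩

theorem letterCells_addStrip_of_ne {a : ℕ+} (ha : a ≠ n.succPNat) :
    (S.addStrip hS hν).letterCells a = S.letterCells a := by
  ext ⟨i, j⟩
  constructor
  · rintro ⟨h₁, h₂, h⟩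
    rcases le_or_gt j (ν i) with hj | hj
    · exact ⟨h₁, hj, (addStrip_entry_of_le hS hν h₁ h₂ hj).symm.trans h⟩
    · exact absurd (h.symm.trans (addStrip_entry_of_lt hS hν h₁ h₂ hj)) ha
  · rintro ⟨h₁, hj, h⟩
    exact ⟨h₁, hj.trans (hν i).1, (addStrip_entry_of_le hS hν h₁ _ hj).trans h⟩

theorem wtY_addStrip (hμ : ∀ i, μ i ≤ ν i) :
    wtY (S.addStrip hS hν) = wtY S + Pi.single n.succPNat (skewSize ν lam) := by
  funext a
  rw [Pi.add_apply, wtY_eq_ncard_letterCells, wtY_eq_ncard_letterCells]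
  rcases eq_or_ne a n.succPNat with rfl | ha
  · rw [letterCells_addStrip_succ hS hν hμ,
      hS.letterCells_eq_empty (a := n.succPNat) n.lt_succ_self, Set.ncard_empty, zero_add,
      Pi.single_eq_same, skewSize]
  · rw [letterCells_addStrip_of_ne hS hν ha, Pi.single_eq_of_ne ha, add_zero]

end AddStrip

open Classical in
/-- The outer shape of the part of `T` with letters at most `n`. The condition on the column `j` of
row `i` is vacuous for `j ≤ μ i`, so this shape contains `μ` as soon as `λ` does. -/
noncomputable def shapeLE (T : SSYT μ lam) (n i : ℕ) : ℕ :=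
  Nat.findGreatest (fun j => ∀ h₁ h₂, (T.entry i j h₁ h₂ : ℕ) ≤ n) (lam i)

theorem shapeLE_le (T : SSYT μ lam) (n i : ℕ) : T.shapeLE n i ≤ lam i :=
  Nat.findGreatest_le _

theorem le_shapeLE_iff (T : SSYT μ lam) {i j : ℕ} (h₂ : j ≤ lam i) :
    j ≤ T.shapeLE n i ↔ ∀ h₁, (T.entry i j h₁ h₂ : ℕ) ≤ n := by
  classical
  let P : ℕ → Prop := fun j => ∀ h₁ h₂, (T.entry i j h₁ h₂ : ℕ) ≤ n
  refine ⟨fun hj h₁ => ?_, fun h => Nat.le_findGreatest h₂ fun h₁ _ => h h₁⟩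
  have spec : P (T.shapeLE n i) :=
    Nat.findGreatest_spec (P := P) (Nat.zero_le _) fun h₁ => absurd h₁ (Nat.not_lt_zero _)
  rcases hj.lt_or_eq with hlt | rfl
  · have left_le := T.row_weak i _ _ h₁ h₂ (h₁.trans hlt) (T.shapeLE_le n i) hlt
    exact (PNat.coe_le_coe _ _ |>.mpr left_le).trans (spec _ _)
  · exact spec h₁ h₂

theorem le_shapeLE (T : SSYT μ lam) (n : ℕ) {i : ℕ} (h : μ i ≤ lam i) : μ i ≤ T.shapeLE n i :=
  (T.le_shapeLE_iff h).mpr fun h₁ => absurd h₁ (lt_irrefl _)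

theorem isHorizontalStrip_shapeLE (hμ : Antitone μ) (hlam : Antitone lam) {T : SSYT μ lam}
    (hT : T.LettersLE (n + 1)) : IsHorizontalStrip (T.shapeLE n) lam := by
  refine fun i => ⟨T.shapeLE_le n i, (T.le_shapeLE_iff (hlam i.le_succ)).mpr fun h₁ => ?_⟩
  have below := T.col_strict i (i + 1) _ h₁ (hlam i.le_succ) ((hμ i.le_succ).trans_lt h₁) le_rfl
    i.lt_succ_self
  exact Nat.le_of_lt_succ ((PNat.coe_lt_coe _ _ |>.mpr below).trans_le (hT _ _ _ _))

/-- The part of `T` with letters at most `n`. -/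
noncomputable def restrictLE (T : SSYT μ lam) (n : ℕ) : SSYT μ (T.shapeLE n) where
  entry i j h₁ h₂ := T.entry i j h₁ (h₂.trans (T.shapeLE_le n i))
  row_weak _ _ _ _ _ _ _ := T.row_weak _ _ _ _ _ _ _
  col_strict _ _ _ _ _ _ _ := T.col_strict _ _ _ _ _ _ _

theorem lettersLE_restrictLE (T : SSYT μ lam) (n : ℕ) : (T.restrictLE n).LettersLE n :=
  fun _ _ h₁ h₂ => (T.le_shapeLE_iff _).mp h₂ h₁

theorem addStrip_restrictLE {T : SSYT μ lam} (hT : T.LettersLE (n + 1))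
    (hν : IsHorizontalStrip (T.shapeLE n) lam) :
    (T.restrictLE n).addStrip (T.lettersLE_restrictLE n) hν = T := by
  refine ext_entry fun i j h₁ h₂ => ?_
  rcases le_or_gt j (T.shapeLE n i) with hj | hj
  · exact addStrip_entry_of_le _ hν h₁ h₂ hj
  · have hn : ¬(T.entry i j h₁ h₂ : ℕ) ≤ n := fun h =>
      hj.not_ge ((T.le_shapeLE_iff h₂).mpr fun _ => h)
    rw [addStrip_entry_of_lt _ hν h₁ h₂ hj]
    exact PNat.eq (le_antisymm (not_le.mp hn) (hT i j h₁ h₂))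

theorem shapeLE_addStrip {S : SSYT μ ν} (hS : S.LettersLE n) (hν : IsHorizontalStrip ν lam)
    (hμ : ∀ i, μ i ≤ ν i) : (S.addStrip hS hν).shapeLE n = ν := by
  funext i
  refine eq_of_forall_le_iff fun j => ?_
  rcases le_or_gt j (lam i) with h₂ | h₂
  · rw [le_shapeLE_iff _ h₂]
    simp only [addStrip_entry_le_iff hS hν _ h₂]
    exact ⟨fun h => (le_or_gt j (μ i)).elim (fun hj => hj.trans (hμ i)) h, fun h _ => h⟩
  · exact iff_of_false (((shapeLE_le _ n i).trans_lt h₂).not_ge) (((hν i).1.trans_lt h₂).not_ge)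

end SSYT

/-- The quiver of tableaux with letters at most `n`, from the inner to the outer shape. -/
noncomputable def tableauQuiver (n : ℕ) : WeightedQuiver Shape (ℕ+ → ℕ) where
  Hom μ lam := {T : SSYT μ.1 lam.1 // (∀ i, μ.1 i ≤ lam.1 i) ∧ T.LettersLE n}
  wt T := wtY T.1

/-- The tableau of shape `μ/μ`, which has no cells. -/
def emptyTableau (n : ℕ) (μ : Shape) : (tableauQuiver n).Hom μ μ :=
  ⟨{ entry := fun _ _ h₁ h₂ => absurd h₁ h₂.not_gt
     row_weak := fun _ _ _ h₁ h₂ => absurd h₁ h₂.not_gt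
     col_strict := fun _ _ _ h₁ h₂ => absurd h₁ h₂.not_gt },
    fun _ => le_rfl, fun _ _ h₁ h₂ => absurd h₁ h₂.not_gt⟩

instance (n : ℕ) (μ : Shape) : Unique ((tableauQuiver n).Hom μ μ) where
  default := emptyTableau n μ
  uniq _ := Subtype.ext (Subsingleton.elim _ _)

theorem wt_tableau_self (n : ℕ) {μ : Shape} (T : (tableauQuiver n).Hom μ μ) :
    (tableauQuiver n).wt T = 0 := by
  funext a
  have empty : T.1.letterCells a = ∅ :=
    Set.eq_empty_of_forall_notMem fun _ ⟨h₁, h₂, _⟩ => h₂.not_gt h₁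
  exact (congrArg Set.ncard empty).trans (Set.ncard_empty _)

theorem eq_of_tableau_zero {μ lam : Shape} (T : (tableauQuiver 0).Hom μ lam) : μ = lam := by
  refine Subtype.ext (funext fun i => (T.2.1 i).antisymm (le_of_not_gt fun h₁ => ?_))
  exact (T.1.entry i _ h₁ le_rfl).pos.not_ge (T.2.2 i _ h₁ le_rfl)

/-- Base case of the decomposition into strips: without letters there are no cells. -/
def tableauZeroIso : Iso (identity Shape (ℕ+ → ℕ)) (tableauQuiver 0) where
  equiv μ lam :=
    { toFun | ⟨⟨h⟩⟩ => h ▸ emptyTableau 0 μ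
      invFun T := ⟨⟨eq_of_tableau_zero T⟩⟩
      left_inv _ := rfl
      right_inv T := by
        obtain rfl := eq_of_tableau_zero T
        exact Subsingleton.elim _ _ }
  wt_equiv | ⟨⟨rfl⟩⟩ => wt_tableau_self 0 _

theorem tableauComp_ext {n : ℕ} {a : ℕ+} {μ lam : Shape}
    {x y : ((tableauQuiver n).comp (stripQuiver a)).Hom μ lam} (hν : x.1.1 = y.1.1)
    (hentry : ∀ i j h₁ h₂ h₂', x.2.1.1.entry i j h₁ h₂ = y.2.1.1.entry i j h₁ h₂') : x = y := by
  obtain ⟨ν, ⟨S, _⟩, ⟨_⟩⟩ := x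
  obtain ⟨ν', ⟨S', _⟩, ⟨_⟩⟩ := y
  obtain rfl : ν = ν' := Subtype.ext hν
  obtain rfl : S = S' := SSYT.ext_entry fun i j h₁ h₂ => hentry i j h₁ h₂ h₂
  rfl

/-- Removing the letters `n + 1` splits a tableau into a smaller one and a horizontal strip. -/
noncomputable def tableauSuccIso (n : ℕ) :
    Iso ((tableauQuiver n).comp (stripQuiver n.succPNat)) (tableauQuiver (n + 1)) where
  equiv μ lam :=
    { toFun | ⟨_, S, hν⟩ => ⟨S.1.addStrip S.2.2 hν.down,
        fun i => (S.2.1 i).trans (hν.down i).1, SSYT.lettersLE_addStrip S.2.2 hν.down⟩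
      invFun T :=
        have hν := SSYT.isHorizontalStrip_shapeLE μ.2.1 lam.2.1 T.2.2
        ⟨⟨T.1.shapeLE n, hν.isPartition_inner lam.2⟩,
          ⟨T.1.restrictLE n, fun i => T.1.le_shapeLE n (T.2.1 i), T.1.lettersLE_restrictLE n⟩, ⟨hν⟩⟩
      left_inv := fun ⟨_, S, hν⟩ => tableauComp_ext
        (SSYT.shapeLE_addStrip S.2.2 hν.down S.2.1)
        fun _ _ h₁ _ h₂' => SSYT.addStrip_entry_of_le S.2.2 hν.down h₁
          (h₂'.trans (hν.down _).1) h₂'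
      right_inv T := Subtype.ext (SSYT.addStrip_restrictLE T.2.2
        (SSYT.isHorizontalStrip_shapeLE μ.2.1 lam.2.1 T.2.2)) }
  wt_equiv := fun ⟨_, S, hν⟩ => SSYT.wtY_addStrip S.2.2 hν.down S.2.1

/-! ### Counting pairs of tableaux -/

/-- Growth rules for the single letters stack into one for tableaux. -/
noncomputable def tableauRuleOfStripRule {B : WeightedQuiver Shape (ℕ+ → ℕ)}
    (E : ∀ a, GrowthRule (stripQuiver a) B) : ∀ n, GrowthRule (tableauQuiver n) B
  | 0 => (GrowthRule.identity B).congr tableauZeroIso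
  | n + 1 => ((tableauRuleOfStripRule E n).comp (E n.succPNat)).congr (tableauSuccIso n)

/-- The growth rule for pairs of tableaux: Fomin's local rule on a grid of `n × m` squares. -/
noncomputable def tableauRule (n m : ℕ) : GrowthRule (tableauQuiver n) (tableauQuiver m) :=
  tableauRuleOfStripRule (fun a => (tableauRuleOfStripRule (fun b => stripRule b a) m).swap) n

/-- The empty partition. -/
def emptyShape : Shape := ⟨fun _ => 0, fun _ _ _ => le_rfl, 0, fun _ _ => rfl⟩

instance (n m : ℕ) : Unique (Span (tableauQuiver n) (tableauQuiver m) emptyShape emptyShape) where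
  default := ⟨emptyShape, emptyTableau n _, emptyTableau m _⟩
  uniq := by
    rintro ⟨μ, T, U⟩
    obtain rfl : μ = emptyShape := Subtype.ext (funext fun i => Nat.le_zero.mp (T.2.1 i))
    rw [Subsingleton.elim T (emptyTableau n _), Subsingleton.elim U (emptyTableau m _)]

section BoundedLetters

variable {n m : ℕ} {f g : ℕ+ → ℕ} (hf : ∀ a : ℕ+, n < a → f a = 0)
  (hg : ∀ a : ℕ+, m < a → g a = 0) (α β : Shape)

/-- Tableaux of prescribed weights have bounded letters: the right-hand side of the identity. -/
def upperPairEquiv :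
    {y : Σ lam : Shape, SSYT β.1 lam.1 × SSYT α.1 lam.1 //
      (∀ i, α.1 i ≤ y.1.1 i) ∧ (∀ i, β.1 i ≤ y.1.1 i) ∧
      (∀ a, wtY y.2.1 a = f a) ∧ (∀ a, wtY y.2.2 a = g a)} ≃
    {y : Cospan (tableauQuiver n) (tableauQuiver m) α β // y.wt = (f, g)} where
  toFun := fun ⟨⟨lam, P, Q⟩, hα, hβ, hP, hQ⟩ =>
    ⟨⟨lam, ⟨P, hβ, P.lettersLE_of_wtY_le lam.2 hf fun a => (hP a).le⟩,
      ⟨Q, hα, Q.lettersLE_of_wtY_le lam.2 hg fun a => (hQ a).le⟩⟩,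
      Prod.ext (funext hP) (funext hQ)⟩
  invFun y := ⟨⟨y.1.apex, y.1.left.1, y.1.right.1⟩, y.1.right.2.1, y.1.left.2.1,
    congrFun (congrArg Prod.fst y.2), congrFun (congrArg Prod.snd y.2)⟩
  left_inv | ⟨⟨_, _, _⟩, _, _, _, _⟩ => rfl
  right_inv _ := rfl

/-- Tableaux of prescribed weights have bounded letters: the left-hand side of the identity. -/
def lowerQuadrupleEquiv :
    {x : Σ (μ : Shape) (γ : Shape),
      (SSYT μ.1 α.1 × SSYT μ.1 β.1) × (SSYT (fun _ => 0) γ.1 × SSYT (fun _ => 0) γ.1) //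
      (∀ i, x.1.1 i ≤ α.1 i) ∧ (∀ i, x.1.1 i ≤ β.1 i) ∧
      (∀ a, wtY x.2.2.1.1 a + wtY x.2.2.2.1 a = f a) ∧
      (∀ a, wtY x.2.2.1.2 a + wtY x.2.2.2.2 a = g a)} ≃
    {x : Span (tableauQuiver n) (tableauQuiver m) α β ×
      Cospan (tableauQuiver n) (tableauQuiver m) emptyShape emptyShape //
      x.1.wt + x.2.wt = (f, g)} where
  toFun := fun ⟨⟨μ, γ, ⟨T, U⟩, ⟨V, W⟩⟩, hα, hβ, hTV, hUW⟩ =>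
    ⟨(⟨μ, ⟨T, hα, T.lettersLE_of_wtY_le α.2 hf fun a => le_of_add_le_left (hTV a).le⟩,
        ⟨U, hβ, U.lettersLE_of_wtY_le β.2 hg fun a => le_of_add_le_left (hUW a).le⟩⟩,
      ⟨γ, ⟨V, fun _ => Nat.zero_le _,
          V.lettersLE_of_wtY_le γ.2 hf fun a => le_of_add_le_right (hTV a).le⟩,
        ⟨W, fun _ => Nat.zero_le _,
          W.lettersLE_of_wtY_le γ.2 hg fun a => le_of_add_le_right (hUW a).le⟩⟩),
      Prod.ext (funext hTV) (funext hUW)⟩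
  invFun x := ⟨⟨x.1.1.base, x.1.2.apex, (x.1.1.left.1, x.1.1.right.1),
      (x.1.2.left.1, x.1.2.right.1)⟩, x.1.1.left.2.1, x.1.1.right.2.1,
    congrFun (congrArg Prod.fst x.2), congrFun (congrArg Prod.snd x.2)⟩
  left_inv | ⟨⟨_, _, ⟨_, _⟩, ⟨_, _⟩⟩, _, _, _, _⟩ => rfl
  right_inv _ := rfl

end BoundedLetters

theorem exists_forall_lt_eq_zero {f : ℕ+ → ℕ} (hf : (Function.support f).Finite) :
    ∃ n : ℕ, ∀ a : ℕ+, n < a → f a = 0 := by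
  obtain ⟨n, hn⟩ := hf.bddAbove
  exact ⟨n, fun a ha => by_contra fun hfa => (hn hfa).not_gt ha⟩

end SkewYT

/-- skew Cauchy identity, coefficient form: for partitions
`α, β` and finitely supported `f, g : ℕ+ → ℕ`, the number of 6-tuples
`(μ, γ, T, U, V, W)` — `μ ⊆ α`, `μ ⊆ β` partitions, `γ` a partition, `T` an
SSYT of shape `α/μ`, `U` of shape `β/μ`, `V, W` of straight shape `γ`, with
`wt T + wt V = f` and `wt U + wt W = g` — equals the number of triples
`(λ, P, Q)` — `λ ⊇ α, β` a partition, `P` an SSYT of shape `λ/β` with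
`wt P = f`, `Q` of shape `λ/α` with `wt Q = g`. -/
theorem stmt17 (α β : {h : ℕ → ℕ // IsPartition h})
    (f g : ℕ+ → ℕ) (hf : (Function.support f).Finite) (hg : (Function.support g).Finite) :
    Nat.card {x : Σ (μ : {h : ℕ → ℕ // IsPartition h}) (γ : {h : ℕ → ℕ // IsPartition h}),
                (SSYT μ.1 α.1 × SSYT μ.1 β.1) × (SSYT (fun _ => 0) γ.1 × SSYT (fun _ => 0) γ.1) //
                (∀ i, x.1.1 i ≤ α.1 i) ∧ (∀ i, x.1.1 i ≤ β.1 i) ∧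
                (∀ a, wtY x.2.2.1.1 a + wtY x.2.2.2.1 a = f a) ∧
                (∀ a, wtY x.2.2.1.2 a + wtY x.2.2.2.2 a = g a)} =
    Nat.card {y : Σ lam : {h : ℕ → ℕ // IsPartition h}, SSYT β.1 lam.1 × SSYT α.1 lam.1 //
                (∀ i, α.1 i ≤ y.1.1 i) ∧ (∀ i, β.1 i ≤ y.1.1 i) ∧
                (∀ a, wtY y.2.1 a = f a) ∧ (∀ a, wtY y.2.2 a = g a)} := by
  obtain ⟨n, hn⟩ := exists_forall_lt_eq_zero hf
  obtain ⟨m, hm⟩ := exists_forall_lt_eq_zero hg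
  have hwt : (default : WeightedQuiver.Span (tableauQuiver n) (tableauQuiver m)
      emptyShape emptyShape).wt = 0 :=
    Prod.ext (wt_tableau_self n _) (wt_tableau_self m _)
  rw [Nat.card_congr (lowerQuadrupleEquiv hn hm α β), Nat.card_congr (upperPairEquiv hn hm α β)]
  exact (tableauRule n m).card_span_prod_cospan_eq_card_cospan hwt α β (f, g)
end

section
/- For every positive integer m, any two words of length m each of which contains every letter of {1, 2, …, m} exactly once (i.e. any two permutations of 1, 2, …, m written as words) are cyclic Knuth equivalent. -/
namespace CycKnuth

/-- Generators of cyclic Knuth equivalence on words (lists of positive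
integers): the two elementary Knuth transformations
`yzx → yxz` (for `x < y ≤ z`) and `xzy → zxy` (for `x ≤ y < z`), and the
rotation moving the last letter to the front.  (The generated equivalence
relation automatically contains the inverse transformations.) -/
inductive KnuthStep : List ℕ+ → List ℕ+ → Prop
  | K1 (a b : List ℕ+) (x y z : ℕ+) (h₁ : x < y) (h₂ : y ≤ z) :
      KnuthStep (a ++ [y, z, x] ++ b) (a ++ [y, x, z] ++ b)
  | K2 (a b : List ℕ+) (x y z : ℕ+) (h₁ : x ≤ y) (h₂ : y < z) :
      KnuthStep (a ++ [x, z, y] ++ b) (a ++ [z, x, y] ++ b)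
  | rot (w : List ℕ+) (x : ℕ+) :
      KnuthStep (w ++ [x]) (x :: w)

/-- Cyclic Knuth equivalence: the equivalence relation generated by the
elementary Knuth transformations and rotations. -/
def CyclicKnuthEquiv (v w : List ℕ+) : Prop := Relation.EqvGen KnuthStep v w

end CycKnuth

open CycKnuth

/-!
Every word can be sorted from left to right. Suppose a prefix `s` consists of the smallest letters
in increasing order, and let `m` be the smallest letter of the rest `u`. If `u` starts with a
descent `z > y`, then Knuth moves carry `z` to the left through `s`, and a rotation puts it at the
end of the word. If `u` does not start with `m`, then the part of `u` up to its first `m` ends in a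
descent, which Knuth moves within that part carry to the beginning of `u`; rotating its larger
letter away brings `m` at least one place closer to `s`.
-/

namespace CycKnuth

theorem KnuthStep.cyclicKnuthEquiv {v w : List ℕ+} (h : KnuthStep v w) : CyclicKnuthEquiv v w :=
  Relation.EqvGen.rel v w h

namespace CyclicKnuthEquiv

variable {u v w : List ℕ+}

@[refl]
theorem refl (w : List ℕ+) : CyclicKnuthEquiv w w :=
  Relation.EqvGen.refl w

@[symm]
theorem symm (h : CyclicKnuthEquiv v w) : CyclicKnuthEquiv w v :=
  Relation.EqvGen.symm _ _ h

@[trans]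
theorem trans (huv : CyclicKnuthEquiv u v) (hvw : CyclicKnuthEquiv v w) : CyclicKnuthEquiv u w :=
  Relation.EqvGen.trans _ _ _ huv hvw

instance : Trans CyclicKnuthEquiv CyclicKnuthEquiv CyclicKnuthEquiv :=
  ⟨trans⟩

theorem perm (h : CyclicKnuthEquiv v w) : v.Perm w := by
  induction h with
  | rel _ _ step =>
    cases step with
    | K1 a b x y z => exact (((List.Perm.swap x z []).cons y).append_left a).append_right b
    | K2 a b x y z => exact ((List.Perm.swap z x [y]).append_left a).append_right b
    | rot w x => exact List.perm_append_singleton x w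
  | refl w => exact List.Perm.refl w
  | symm _ _ _ ih => exact ih.symm
  | trans _ _ _ _ _ ih₁ ih₂ => exact ih₁.trans ih₂

theorem cons_append_singleton (x : ℕ+) (w : List ℕ+) : CyclicKnuthEquiv (x :: w) (w ++ [x]) :=
  (KnuthStep.rot w x).cyclicKnuthEquiv.symm

end CyclicKnuthEquiv

/-- `v` may be replaced by `w` inside any word without changing its cyclic Knuth class. Unlike a
rotation, an elementary Knuth transformation acts locally, so it yields this congruence at once;
`CyclicKnuthCongr` plays the role of plactic equivalence. -/
def CyclicKnuthCongr (v w : List ℕ+) : Prop :=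
  ∀ a b : List ℕ+, CyclicKnuthEquiv (a ++ v ++ b) (a ++ w ++ b)

namespace CyclicKnuthCongr

variable {u v w : List ℕ+} {x y z : ℕ+}

theorem refl (w : List ℕ+) : CyclicKnuthCongr w w :=
  fun _ _ => .refl _

theorem trans (huv : CyclicKnuthCongr u v) (hvw : CyclicKnuthCongr v w) : CyclicKnuthCongr u w :=
  fun a b => (huv a b).trans (hvw a b)

instance : Trans CyclicKnuthCongr CyclicKnuthCongr CyclicKnuthCongr :=
  ⟨trans⟩

theorem perm (h : CyclicKnuthCongr v w) : v.Perm w := by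
  simpa only [List.nil_append, List.append_nil] using (h [] []).perm

theorem cons (x : ℕ+) (h : CyclicKnuthCongr v w) : CyclicKnuthCongr (x :: v) (x :: w) :=
  fun a b => by simpa using h (a ++ [x]) b

theorem swap_of_lt_of_le (hxy : x < y) (hyz : y ≤ z) (t : List ℕ+) :
    CyclicKnuthCongr (y :: z :: x :: t) (y :: x :: z :: t) :=
  fun a b => by simpa using (KnuthStep.K1 a (t ++ b) x y z hxy hyz).cyclicKnuthEquiv

theorem swap_of_le_of_lt (hxy : x ≤ y) (hyz : y < z) (t : List ℕ+) :
    CyclicKnuthCongr (x :: z :: y :: t) (z :: x :: y :: t) :=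
  fun a b => by simpa using (KnuthStep.K2 a (t ++ b) x y z hxy hyz).cyclicKnuthEquiv

theorem exists_descent_head (hyz : y < z) (p : List ℕ+) :
    ∃ z' y' t, y' < z' ∧ CyclicKnuthCongr (p ++ [z, y]) (z' :: y' :: t) := by
  induction p with
  | nil => exact ⟨z, y, [], hyz, refl _⟩
  | cons x p ih =>
    obtain ⟨z', y', t, hyz', hp⟩ := ih
    rcases lt_or_ge z' x with hzx | hxz
    · exact ⟨x, z', y' :: t, hzx, hp.cons x⟩
    rcases lt_or_ge y' x with hyx | hxy
    · exact ⟨x, y', z' :: t, hyx, (hp.cons x).trans (swap_of_lt_of_le hyx hxz t)⟩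
    · exact ⟨z', x, y' :: t, hxy.trans_lt hyz', (hp.cons x).trans (swap_of_le_of_lt hxy hyz' t)⟩

theorem append_pair_of_pairwise {s : List ℕ+} (hs : s.Pairwise (· ≤ ·)) (hsy : ∀ c ∈ s, c ≤ y)
    (hyz : y < z) : CyclicKnuthCongr (s ++ [z, y]) (z :: (s ++ [y])) := by
  induction s with
  | nil => exact refl _
  | cons x s ih =>
    obtain ⟨hxs, hs⟩ := List.pairwise_cons.1 hs
    obtain ⟨hxy, hsy⟩ := List.forall_mem_cons.1 hsy
    calc CyclicKnuthCongr (x :: (s ++ [z, y])) (x :: z :: (s ++ [y])) := (ih hs hsy).cons x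
      CyclicKnuthCongr _ (z :: x :: (s ++ [y])) := by
        cases s with
        | nil => exact swap_of_le_of_lt hxy hyz []
        | cons c s =>
          have hcz : c < z := (hsy c List.mem_cons_self).trans_lt hyz
          exact swap_of_le_of_lt (hxs c List.mem_cons_self) hcz (s ++ [y])

end CyclicKnuthCongr

namespace CyclicKnuthEquiv

variable {s : List ℕ+} {m y z : ℕ+}

theorem append_cons_cons_rotate (hs : s.Pairwise (· ≤ ·)) (hsy : ∀ c ∈ s, c ≤ y) (hyz : y < z)
    (t : List ℕ+) :
    CyclicKnuthEquiv (s ++ z :: y :: t) (s ++ y :: t ++ [z]) := by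
  have hpass : CyclicKnuthEquiv (s ++ z :: y :: t) (z :: (s ++ y :: t)) := by
    simpa using CyclicKnuthCongr.append_pair_of_pairwise hs hsy hyz [] t
  exact hpass.trans (cons_append_singleton z _)

theorem exists_append_cons_of_forall_lt (hs : s.Pairwise (· ≤ ·)) (hsm : ∀ c ∈ s, c ≤ m)
    (p t : List ℕ+) (hp : ∀ c ∈ p, m < c) :
    ∃ t', CyclicKnuthEquiv (s ++ p ++ m :: t) (s ++ m :: t') := by
  induction hn : p.length using Nat.strong_induction_on generalizing p t with
  | _ n ih =>
  obtain rfl | ⟨q, x, rfl⟩ := p.eq_nil_or_concat'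
  · exact ⟨t, by simpa using refl _⟩
  obtain ⟨z, y, r, hyz, hdesc⟩ := CyclicKnuthCongr.exists_descent_head (hp x (by simp)) q
  have hmem : ∀ c, c ∈ z :: y :: r ↔ c ∈ q ++ [x] ∨ c = m := fun c => by
    rw [← hdesc.perm.mem_iff]
    simp [or_assoc]
  have hmy : m ≤ y := ((hmem y).1 (by simp)).elim (fun hy => (hp y hy).le) ge_of_eq
  have hm : m ∈ y :: r :=
    (List.mem_cons.1 ((hmem m).2 (.inr rfl))).resolve_left (hmy.trans_lt hyz).ne
  obtain ⟨p', t', hpt, hmp'⟩ := List.eq_append_cons_of_mem hm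
  have hp' : ∀ c ∈ p', m < c := fun c hc =>
    hp c (((hmem c).1 (by simp [hpt, hc])).resolve_right (ne_of_mem_of_not_mem hc hmp'))
  have hlen : p'.length < n := by
    have hqr := hdesc.perm.length_eq
    have hyr := congrArg List.length hpt
    simp only [List.length_append, List.length_cons, List.length_nil] at hn hqr hyr
    omega
  obtain ⟨t'', ht''⟩ := ih p'.length hlen p' (t' ++ t ++ [z]) hp' rfl
  refine ⟨t'', ?_⟩
  calc CyclicKnuthEquiv (s ++ (q ++ [x]) ++ m :: t) (s ++ z :: y :: (r ++ t)) := by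
        simpa using hdesc s t
    CyclicKnuthEquiv _ (s ++ y :: (r ++ t) ++ [z]) :=
      append_cons_cons_rotate hs (fun c hc => (hsm c hc).trans hmy) hyz _
    _ = s ++ p' ++ m :: (t' ++ t ++ [z]) := by
      rw [← List.cons_append, hpt]
      simp
    CyclicKnuthEquiv _ (s ++ m :: t'') := ht''

theorem append_left_of_perm_of_pairwise (s r u : List ℕ+) (hsr : (s ++ r).Pairwise (· ≤ ·))
    (hur : u.Perm r) : CyclicKnuthEquiv (s ++ u) (s ++ r) := by
  induction r generalizing s u with
  | nil => rw [hur.eq_nil]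
  | cons m r ih =>
    obtain ⟨p, t, rfl, hmp⟩ := List.eq_append_cons_of_mem (hur.mem_iff.2 List.mem_cons_self)
    obtain ⟨hs, hmr, hsm⟩ := List.pairwise_append.1 hsr
    have hp : ∀ c ∈ p, m < c := fun c hc => by
      have hcm : c ≠ m := ne_of_mem_of_not_mem hc hmp
      have hcr : c ∈ r := List.mem_of_ne_of_mem hcm (hur.subset (List.mem_append_left _ hc))
      exact (List.rel_of_pairwise_cons hmr hcr).lt_of_ne' hcm
    obtain ⟨t', ht'⟩ :=
      exists_append_cons_of_forall_lt hs (fun c hc => hsm c hc m List.mem_cons_self) p t hp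
    have ht'r : t'.Perm r := by
      have hpt : (p ++ m :: t).Perm (m :: t') := by
        simpa [List.perm_append_left_iff] using ht'.perm
      exact (hpt.symm.trans hur).cons_inv
    calc CyclicKnuthEquiv (s ++ (p ++ m :: t)) (s ++ m :: t') := by simpa using ht'
      CyclicKnuthEquiv _ (s ++ m :: r) := by
        simpa using ih (s ++ [m]) t' (by simpa using hsr) ht'r

end CyclicKnuthEquiv

end CycKnuth

theorem stmt18_general (w v : List ℕ+) : CyclicKnuthEquiv w v ↔ w.Perm v := by
  refine ⟨CyclicKnuthEquiv.perm, fun hwv => ?_⟩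
  have equiv_sort : ∀ u, u.Perm v → CyclicKnuthEquiv u (v.insertionSort (· ≤ ·)) := fun u huv =>
    CyclicKnuthEquiv.append_left_of_perm_of_pairwise [] _ u (List.pairwise_insertionSort _ v)
      (huv.trans (List.perm_insertionSort _ v).symm)
  exact (equiv_sort w hwv).trans (equiv_sort v (.refl v)).symm

/-- for every positive integer `m`, any two words of length `m`
containing each letter of `{1, …, m}` exactly once (i.e. permutations of
`1, 2, …, m`) are cyclic Knuth equivalent. -/
theorem stmt18 (m : ℕ) (hm : 0 < m) (w v : List ℕ+)
    (hw : w.Perm ((List.range m).map Nat.succPNat))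
    (hv : v.Perm ((List.range m).map Nat.succPNat)) :
    CyclicKnuthEquiv w v :=
  (stmt18_general w v).2 (hw.trans hv.symm)
end
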